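/- arXiv:2406.06214 — 7 statements merged into one kernel-verified Lean document; each statement's English description precedes it below -/
import Mathlib

section
/- There exists a unique representation basis A of the integers such that A(-x,x) ≥ (1/8)·x^{1/3} for all sufficiently large real numbers x. -/
open Filter Set

/-- `repCount A n` is the number of representations of `n` as `a + a'` with
`a ≤ a'` and `a, a' ∈ A`. -/
noncomputable def repCount (A : Set ℤ) (n : ℤ) : ℕ :=
  {p : ℤ × ℤ | p.1 ∈ A ∧ p.2 ∈ A ∧ p.1 ≤ p.2 ∧ p.1 + p.2 = n}.ncard

/-- `A` is a unique representation basis of `ℤ` if `r_A(n) = 1` for all `n`. -/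
def IsUniqueRepBasis (A : Set ℤ) : Prop := ∀ n : ℤ, repCount A n = 1

/-- `countIn A y x` is the number of elements of `A` in the real interval `[y, x]`. -/
noncomputable def countIn (A : Set ℤ) (y x : ℝ) : ℕ :=
  {a : ℤ | a ∈ A ∧ y ≤ (a : ℝ) ∧ (a : ℝ) ≤ x}.ncard

def SidonF (A : Finset ℤ) : Prop :=
  ∀ a ∈ A, ∀ b ∈ A, ∀ c ∈ A, ∀ d ∈ A, a + b = c + d → (a = c ∧ b = d) ∨ (a = d ∧ b = c)

def RepF (A : Finset ℤ) (n : ℤ) : Prop := ∃ a ∈ A, ∃ b ∈ A, a + b = n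

def GoodF (m : ℕ) (A : Finset ℤ) : Prop :=
  A.card = 2 * m ∧ (∀ a ∈ A, |a| ≤ 512 * (m : ℤ) ^ 3) ∧ SidonF A

lemma exists_free (A : Finset ℤ) (m : ℕ) (hA : A.card = 2 * m) (n : ℤ) :
    ∃ c : ℤ, 0 ≤ c ∧ c ≤ 100 * ((m : ℤ) + 1) ^ 3 ∧
      (∀ a ∈ A, c ≠ a) ∧ (∀ a ∈ A, c ≠ n - a) ∧
      (∀ a ∈ A, ∀ b ∈ A, ∀ d ∈ A, c + d ≠ a + b) ∧
      (∀ a ∈ A, ∀ b ∈ A, ∀ d ∈ A, n - c + d ≠ a + b) ∧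
      (∀ a ∈ A, ∀ b ∈ A, 2 * c ≠ a + b) ∧
      (∀ a ∈ A, ∀ b ∈ A, 2 * c ≠ 2 * n - a - b) ∧
      (∀ a ∈ A, ∀ b ∈ A, 2 * c ≠ n + a - b) ∧
      (∀ a ∈ A, 3 * c ≠ n + a) ∧ (∀ a ∈ A, 3 * c ≠ 2 * n - a) ∧ 2 * c ≠ n := by
  classical
  set T := A ×ˢ A ×ˢ A with hT
  have hTc : T.card = 8 * m ^ 3 := by
    simp only [hT, Finset.card_product, hA]; ring
  have im : ∀ f : ℤ × ℤ × ℤ → ℤ, (T.image f).card ≤ 8 * m ^ 3 :=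
    fun f => hTc ▸ Finset.card_image_le
  let F : Fin 9 → ℤ × ℤ × ℤ → ℤ := ![fun p => p.1, fun p => n - p.1,
    fun p => p.1 + p.2.1 - p.2.2, fun p => n + p.2.2 - p.1 - p.2.1,
    fun p => (p.1 + p.2.1) / 2, fun p => (2 * n - p.1 - p.2.1) / 2,
    fun p => (n + p.1 - p.2.1) / 2, fun p => (n + p.1) / 3, fun p => (2 * n - p.1) / 3]
  let Bad : Finset ℤ := insert (n / 2) (Finset.univ.biUnion fun i => T.image (F i))
  have hBad : Bad.card ≤ 72 * m ^ 3 + 1 := by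
    refine (Finset.card_insert_le _ _).trans ?_
    have := Finset.card_biUnion_le_card_mul (Finset.univ : Finset (Fin 9))
      (fun i => T.image (F i)) (8 * m ^ 3) (fun i _ => im _)
    simp at this
    omega
  have hlt : Bad.card < (Finset.Icc (0 : ℤ) (100 * ((m : ℤ) + 1) ^ 3)).card := by
    have e : (100 * ((m : ℤ) + 1) ^ 3 + 1 - 0).toNat = 100 * (m + 1) ^ 3 + 1 := by
      have : (100 * ((m : ℤ) + 1) ^ 3 + 1 - 0) = ((100 * (m + 1) ^ 3 + 1 : ℕ) : ℤ) := by
        push_cast; ring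
      rw [this, Int.toNat_natCast]
    rw [Int.card_Icc, e]
    have : m ^ 3 < (m + 1) ^ 3 := Nat.pow_lt_pow_left (by omega) (by norm_num)
    omega
  obtain ⟨c, hc, hcB⟩ := Finset.exists_mem_notMem_of_card_lt_card hlt
  rw [Finset.mem_Icc] at hc
  have key : ∀ i, ∀ a ∈ A, ∀ b ∈ A, ∀ d ∈ A, F i (a, b, d) ≠ c := by
    intro i a ha b hb d hd h
    apply hcB
    refine Finset.mem_insert_of_mem (Finset.mem_biUnion.2 ⟨i, Finset.mem_univ _, ?_⟩)
    exact Finset.mem_image.2 ⟨(a, b, d), by simp [hT, ha, hb, hd], h⟩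
  have k0 : n / 2 ≠ c := fun h => hcB (h ▸ Finset.mem_insert_self _ _)
  refine ⟨c, hc.1, hc.2, ?_, ?_, ?_, ?_, ?_, ?_, ?_, ?_, ?_, by omega⟩
  · intro a ha h; exact key 0 a ha a ha a ha (by simp [F]; omega)
  · intro a ha h; exact key 1 a ha a ha a ha (by simp [F]; omega)
  · intro a ha b hb d hd h; exact key 2 a ha b hb d hd (by simp [F]; omega)
  · intro a ha b hb d hd h; exact key 3 a ha b hb d hd (by simp [F]; omega)
  · intro a ha b hb h; exact key 4 a ha b hb a ha (by simp [F]; omega)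
  · intro a ha b hb h; exact key 5 a ha b hb a ha (by simp [F]; omega)
  · intro a ha b hb h; exact key 6 a ha b hb a ha (by simp [F]; omega)
  · intro a ha h; exact key 7 a ha a ha a ha (by simp [F]; omega)
  · intro a ha h; exact key 8 a ha a ha a ha (by simp [F]; omega)

/-- Inserting `c` and `e = n - c`. -/
lemma sidon_insert (A : Finset ℤ) (hS : SidonF A) (n c e : ℤ) (hn : ¬ RepF A n) (he : c + e = n)
    (h1 : ∀ a ∈ A, c ≠ a) (h2 : ∀ a ∈ A, e ≠ a)
    (h3 : ∀ a ∈ A, ∀ b ∈ A, ∀ d ∈ A, c + d ≠ a + b)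
    (h4 : ∀ a ∈ A, ∀ b ∈ A, ∀ d ∈ A, e + d ≠ a + b)
    (h5 : ∀ a ∈ A, ∀ b ∈ A, c + c ≠ a + b)
    (h6 : ∀ a ∈ A, ∀ b ∈ A, e + e ≠ a + b)
    (h7 : ∀ a ∈ A, ∀ b ∈ A, c + b ≠ e + a)
    (h8 : ∀ a ∈ A, c + c ≠ e + a) (h9 : ∀ a ∈ A, e + e ≠ c + a) (h10 : c ≠ e) :
    SidonF (insert c (insert e A)) := by
  have h11 : ∀ a ∈ A, ∀ b ∈ A, c + e ≠ a + b :=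
    fun a ha b hb h => hn ⟨a, ha, b, hb, by omega⟩
  intro x hx y hy z hz w hw h
  simp only [Finset.mem_insert] at hx hy hz hw
  rcases hx with rfl | rfl | hx <;> rcases hy with rfl | rfl | hy <;>
  rcases hz with rfl | rfl | hz <;> rcases hw with rfl | rfl | hw <;>
  first
  | exact hS _ hx _ hy _ hz _ hw h
  | omega
  | (exfalso; grind)

lemma step_core (A : Finset ℤ) (m : ℕ) (hA : GoodF m A) (n : ℤ) (hn : ¬ RepF A n)
    (hb : |n| ≤ 4 * ((m : ℤ) + 1) ^ 3) :
    ∃ B, GoodF (m + 1) B ∧ A ⊆ B ∧ RepF B n := by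
  obtain ⟨hc, hbd, hS⟩ := hA
  obtain ⟨c, c0, c1, h1, h2, h3, h4, h5, h6, h7, h8, h9, h10⟩ := exists_free A m hc n
  have hp : (m : ℤ) ^ 3 ≤ ((m : ℤ) + 1) ^ 3 := by gcongr; omega
  have hp0 : 0 ≤ (m : ℤ) ^ 3 := by positivity
  rw [abs_le] at hb
  refine ⟨insert c (insert (n - c) A), ⟨?_, ?_, ?_⟩, ?_, ?_⟩
  · rw [Finset.card_insert_of_notMem, Finset.card_insert_of_notMem, hc]
    · ring
    · intro h; exact h2 _ h (by ring)
    · intro h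
      rcases Finset.mem_insert.1 h with h | h
      · omega
      · exact h1 _ h rfl
  · intro a ha
    simp only [Finset.mem_insert] at ha
    push_cast
    rw [abs_le]
    rcases ha with rfl | rfl | ha
    · constructor <;> linarith
    · constructor <;> linarith
    · have := abs_le.1 (hbd a ha)
      constructor <;> linarith
  · apply sidon_insert A hS n c (n - c) hn (by ring) h1
    · intro a ha h; exact h2 a ha (by omega)
    · exact h3
    · exact h4
    · intro a ha b hb h; exact h5 a ha b hb (by omega)
    · intro a ha b hb h; exact h6 a ha b hb (by omega)
    · intro a ha b hb h; exact h7 a ha b hb (by omega)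
    · intro a ha h; exact h8 a ha (by omega)
    · intro a ha h; exact h9 a ha (by omega)
    · omega
  · exact (Finset.subset_insert _ _).trans (Finset.subset_insert _ _)
  · exact ⟨c, by simp, n - c, by simp, by ring⟩

lemma exists_unrep (A : Finset ℤ) (m : ℕ) (hA : A.card = 2 * m) :
    ∃ n : ℤ, ¬ RepF A n ∧ |n| ≤ 4 * ((m : ℤ) + 1) ^ 3 := by
  classical
  have h : ((A ×ˢ A).image fun p => p.1 + p.2).card
      < (Finset.Icc (0 : ℤ) (4 * (m : ℤ) ^ 2)).card := by
    refine Finset.card_image_le.trans_lt ?_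
    have e : (4 * (m : ℤ) ^ 2 + 1 - 0).toNat = 4 * m ^ 2 + 1 := by
      have : (4 * (m : ℤ) ^ 2 + 1 - 0) = ((4 * m ^ 2 + 1 : ℕ) : ℤ) := by push_cast; ring
      rw [this, Int.toNat_natCast]
    rw [Int.card_Icc, e, Finset.card_product, hA]
    ring_nf; omega
  obtain ⟨n, hn, hnB⟩ := Finset.exists_mem_notMem_of_card_lt_card h
  rw [Finset.mem_Icc] at hn
  refine ⟨n, ?_, ?_⟩
  · rintro ⟨a, ha, b, hb, hab⟩
    exact hnB (Finset.mem_image.2 ⟨(a, b), by simp [ha, hb], hab⟩)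
  · rw [abs_of_nonneg hn.1]
    have : (0 : ℤ) ≤ m := by positivity
    have : 0 ≤ (m : ℤ) ^ 3 := by positivity
    have : 0 ≤ (m : ℤ) ^ 2 := by positivity
    nlinarith

lemma step (A : Finset ℤ) (m : ℕ) (hA : GoodF m A) (n : ℤ) (hb : |n| ≤ (m : ℤ) + 1) :
    ∃ B, GoodF (m + 1) B ∧ A ⊆ B ∧ RepF B n := by
  by_cases hn : RepF A n
  · obtain ⟨k, hk, hkb⟩ := exists_unrep A m hA.1
    obtain ⟨B, hB, hAB, -⟩ := step_core A m hA k hk hkb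
    obtain ⟨a, ha, b, hb, h⟩ := hn
    exact ⟨B, hB, hAB, a, hAB ha, b, hAB hb, h⟩
  · refine step_core A m hA n hn (hb.trans ?_)
    have h0 : (1 : ℤ) ≤ (m : ℤ) + 1 := by omega
    have : (m : ℤ) + 1 ≤ ((m : ℤ) + 1) ^ 3 := le_self_pow₀ h0 (by norm_num)
    omega

def enumZ (m : ℕ) : ℤ := if m % 2 = 0 then (m : ℤ) / 2 else -(((m : ℤ) + 1) / 2)

lemma enumZ_abs (m : ℕ) : |enumZ m| ≤ (m : ℤ) + 1 := by
  unfold enumZ; rw [abs_le]; split_ifs <;> constructor <;> omega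

lemma enumZ_surj (n : ℤ) : ∃ m, enumZ m = n := by
  rcases le_or_gt 0 n with h | h
  · refine ⟨2 * n.toNat, ?_⟩
    unfold enumZ; rw [if_pos (by omega)]; omega
  · refine ⟨2 * (-n).toNat - 1, ?_⟩
    unfold enumZ; rw [if_neg (by omega)]; omega

lemma exists_chain : ∃ f : ℕ → Finset ℤ, (∀ m, GoodF m (f m)) ∧ Monotone f ∧
    ∀ n, ∃ m, RepF (f m) n := by
  choose g hg using fun (m : ℕ) (A : {A : Finset ℤ // GoodF m A}) =>
    step A.1 m A.2 (enumZ m) (enumZ_abs m)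
  let f : ∀ m : ℕ, {A : Finset ℤ // GoodF m A} := fun m =>
    Nat.rec ⟨∅, by simp [GoodF, SidonF]⟩ (fun m A => ⟨g m A, (hg m A).1⟩) m
  have hf : ∀ m, (f (m + 1)).1 = g m (f m) := fun m => rfl
  refine ⟨fun m => (f m).1, fun m => (f m).2, monotone_nat_of_le_succ fun m => ?_, fun n => ?_⟩
  · rw [hf]; exact (hg m (f m)).2.1
  · obtain ⟨m, rfl⟩ := enumZ_surj n
    exact ⟨m + 1, (hg m (f m)).2.2⟩

theorem exists_urb_ge_cbrt :
    ∃ A : Set ℤ, IsUniqueRepBasis A ∧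
      ∀ᶠ x : ℝ in atTop, (1 / 8 : ℝ) * x ^ ((1 : ℝ) / 3) ≤ (countIn A (-x) x : ℝ) := by
  obtain ⟨f, hG, hm, hr⟩ := exists_chain
  refine ⟨{a | ∃ m, a ∈ f m}, fun n => ?_, ?_⟩
  · obtain ⟨m, a, ha, b, hb, hab⟩ := hr n
    have main : ∃ a b : ℤ, a ∈ f m ∧ b ∈ f m ∧ a ≤ b ∧ a + b = n := by
      rcases le_total a b with h | h
      · exact ⟨a, b, ha, hb, h, hab⟩
      · exact ⟨b, a, hb, ha, h, by omega⟩
    obtain ⟨a, b, ha, hb, hle, hab⟩ := main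
    unfold repCount
    rw [Set.ncard_eq_one]
    refine ⟨(a, b), ?_⟩
    ext ⟨x, y⟩
    simp only [Set.mem_ofPred_eq, Set.mem_singleton_iff, Prod.mk.injEq]
    constructor
    · rintro ⟨⟨i, hi⟩, ⟨j, hj⟩, hxy, hs⟩
      let M := max m (max i j)
      have h1 : f m ≤ f M := hm (by omega)
      have h2 : f i ≤ f M := hm (by omega)
      have h3 : f j ≤ f M := hm (by omega)
      have := (hG M).2.2 x (h2 hi) y (h3 hj) a (h1 ha) b (h1 hb) (by omega)
      omega
    · rintro ⟨rfl, rfl⟩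
      exact ⟨⟨m, ha⟩, ⟨m, hb⟩, hle, hab⟩
  · filter_upwards [eventually_ge_atTop (512 : ℝ)] with x hx
    have hx0 : (0 : ℝ) ≤ x := by linarith
    set y := x ^ ((1 : ℝ) / 3) with hy
    have hy0 : 0 ≤ y := Real.rpow_nonneg hx0 _
    have hy3 : y ^ 3 = x := by
      rw [hy, ← Real.rpow_natCast, ← Real.rpow_mul hx0]; norm_num
    have hy8 : 8 ≤ y := by
      by_contra h
      push Not at h
      have : y ^ 3 < 8 ^ 3 := by gcongr
      linarith
    let m := ⌊y / 8⌋₊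
    have hm1 : (m : ℝ) ≤ y / 8 := Nat.floor_le (by positivity)
    have hm2 : y / 8 < m + 1 := Nat.lt_floor_add_one _
    have hm3 : 1 ≤ m := Nat.le_floor (by push_cast; linarith)
    have hm4 : (1 : ℝ) ≤ m := by exact_mod_cast hm3
    have hmx : 512 * (m : ℝ) ^ 3 ≤ x := by
      have : (m : ℝ) ^ 3 ≤ (y / 8) ^ 3 := by gcongr
      calc 512 * (m : ℝ) ^ 3 ≤ 512 * (y / 8) ^ 3 := by gcongr
        _ = y ^ 3 := by ring
        _ = x := hy3
    have hcount : 2 * m ≤ countIn {a | ∃ m, a ∈ f m} (-x) x := by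
      unfold countIn
      rw [← (hG m).1, ← Set.ncard_coe_finset]
      apply Set.ncard_le_ncard
      · intro a ha
        have h := (hG m).2.1 a ha
        have h' : |(a : ℝ)| ≤ 512 * (m : ℝ) ^ 3 := by exact_mod_cast h
        have := abs_le.1 (h'.trans hmx)
        exact ⟨⟨m, ha⟩, this.1, this.2⟩
      · refine (Set.finite_Icc (⌈-x⌉) (⌊x⌋)).subset ?_
        rintro a ⟨-, h1, h2⟩
        exact ⟨Int.ceil_le.2 h1, Int.le_floor.2 h2⟩
    have : ((2 * m : ℕ) : ℝ) ≤ (countIn {a | ∃ m, a ∈ f m} (-x) x : ℝ) := by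
      exact_mod_cast hcount
    push_cast at this
    linarith
end

section
/- There exist a real number θ > 0 and a unique representation basis A of the integers such that A(-x,x) ≥ x^θ for all sufficiently large real numbers x. -/
open Filter Set

/-- Sidon property of a finite set of integers. -/
def SidonP (A : Set ℤ) : Prop :=
  ∀ a ∈ A, ∀ b ∈ A, ∀ c ∈ A, ∀ d ∈ A, a + b = c + d → (a = c ∧ b = d) ∨ (a = d ∧ b = c)

/-- `n` is a sum of two elements. -/
def IsRep (A : Finset ℤ) (n : ℤ) : Prop := ∃ a ∈ A, ∃ b ∈ A, a + b = n

lemma exists_min_missing (A : Finset ℤ) :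
    ∃ n : ℤ, ¬ IsRep A n ∧ n.natAbs ≤ A.card ^ 2 ∧ ∀ m, ¬ IsRep A m → n.natAbs ≤ m.natAbs := by
  classical
  have h1 : ∃ n : ℤ, ¬ IsRep A n ∧ n.natAbs ≤ A.card ^ 2 := by
    by_contra! h
    have hs : Finset.Icc (-((A.card : ℤ) ^ 2)) ((A.card : ℤ) ^ 2) ⊆
        (A ×ˢ A).image (fun p => p.1 + p.2) := by
      intro n hn
      rw [Finset.mem_Icc] at hn
      by_contra hc
      have hr : ¬ IsRep A n := by
        rintro ⟨a, ha, b, hb, hab⟩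
        exact hc (Finset.mem_image.2 ⟨(a, b), Finset.mem_product.2 ⟨ha, hb⟩, hab⟩)
      have := h n hr
      zify at this
      have h2 : |n| ≤ (A.card : ℤ) ^ 2 := abs_le.2 hn
      omega
    have h3 := Finset.card_le_card hs
    have h4 : ((A ×ˢ A).image (fun p : ℤ × ℤ => p.1 + p.2)).card ≤ (A ×ˢ A).card :=
      Finset.card_image_le
    rw [Finset.card_product] at h4
    rw [Int.card_Icc] at h3
    have h5 : ((A.card : ℤ) ^ 2) = ((A.card * A.card : ℕ) : ℤ) := by push_cast; ring
    rw [h5] at h3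
    omega
  obtain ⟨n0, h0, hb0⟩ := h1
  have hex : ∃ k : ℕ, ∃ n : ℤ, ¬ IsRep A n ∧ n.natAbs = k := ⟨_, n0, h0, rfl⟩
  obtain ⟨n, hn, hk⟩ := Nat.find_spec hex
  have hmin : ∀ m, ¬ IsRep A m → n.natAbs ≤ m.natAbs := by
    intro m hm
    rw [hk]
    exact Nat.find_min' hex ⟨m, hm, rfl⟩
  exact ⟨n, hn, (hmin n0 h0).trans hb0, hmin⟩

lemma exists_good (T : Finset ℤ) : ∃ b : ℤ, 1 ≤ b ∧ b ≤ 4 * (T.card : ℤ) ^ 4 + 1 ∧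
    ∀ c : ℤ, 1 ≤ c → c ≤ 4 → ∀ t1 ∈ T, ∀ t2 ∈ T, ∀ t3 ∈ T, ∀ t4 ∈ T,
      c * b ≠ t3 + t4 - t1 - t2 := by
  classical
  let S := Finset.Icc (1 : ℤ) 4 ×ˢ (T ×ˢ T) ×ˢ (T ×ˢ T)
  let f : ℤ × (ℤ × ℤ) × (ℤ × ℤ) → ℤ := fun p => (p.2.2.1 + p.2.2.2 - p.2.1.1 - p.2.1.2) / p.1
  have hS : S.card = 4 * T.card ^ 4 := by
    simp only [S, Finset.card_product]
    rw [Int.card_Icc]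
    have : (4 + 1 - 1 : ℤ).toNat = 4 := rfl
    rw [this]; ring
  have hlt : (S.image f).card < (Finset.Icc (1 : ℤ) (4 * (T.card : ℤ) ^ 4 + 1)).card := by
    have h1 : (S.image f).card ≤ S.card := Finset.card_image_le
    rw [Int.card_Icc]
    have h5 : (4 * (T.card : ℤ) ^ 4) = ((4 * T.card ^ 4 : ℕ) : ℤ) := by push_cast; ring
    rw [h5]
    omega
  obtain ⟨b, hb, hbn⟩ := Finset.exists_mem_notMem_of_card_lt_card hlt
  rw [Finset.mem_Icc] at hb
  refine ⟨b, hb.1, hb.2, ?_⟩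
  intro c hc1 hc4 t1 h1 t2 h2 t3 h3 t4 h4 he
  apply hbn
  refine Finset.mem_image.2 ⟨(c, (t1, t2), (t3, t4)), ?_, ?_⟩
  · simp [S, h1, h2, h3, h4, hc1, hc4]
  · simp only [f]
    rw [← he]
    exact Int.mul_ediv_cancel_left _ (by omega)

/-- Invariant of the construction. -/
def UrbInv (k : ℕ) (A : Finset ℤ) : Prop :=
  SidonP (A : Set ℤ) ∧ A.card = 2 * k ∧ ∀ x ∈ A, |x| ≤ 69 * (k : ℤ) ^ 4

/-- One step of the construction. -/
def Step (A B : Finset ℤ) : Prop :=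
  A ⊆ B ∧ ∃ n, ¬ IsRep A n ∧ IsRep B n ∧ ∀ m, ¬ IsRep A m → n.natAbs ≤ m.natAbs

lemma step_exists (k : ℕ) (A : Finset ℤ) (hA : UrbInv k A) : ∃ B, UrbInv (k + 1) B ∧ Step A B := by
  classical
  obtain ⟨hS, hc, hbd⟩ := hA
  obtain ⟨n, hn, hnb, hmin⟩ := exists_min_missing A
  set T : Finset ℤ := insert 0 (insert n A) with hT
  obtain ⟨b, hb1, hb2, hg⟩ := exists_good T
  have hTc : T.card ≤ 2 * k + 2 := by
    have h1 := Finset.card_insert_le 0 (insert n A)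
    have h2 := Finset.card_insert_le n A
    rw [← hT] at h1
    omega
  have h0T : (0 : ℤ) ∈ T := by simp [hT]
  have hnT : n ∈ T := by simp [hT]
  have hAT : ∀ a ∈ A, a ∈ T := by intro a ha; simp [hT, ha]
  have hbA : b ∉ A := by
    intro h
    exact hg 1 (by norm_num) (by norm_num) 0 h0T 0 h0T b (hAT b h) 0 h0T (by ring)
  have hnbA : n - b ∉ A := by
    intro h
    exact hg 1 (by norm_num) (by norm_num) (n - b) (hAT _ h) 0 h0T n hnT 0 h0T (by ring)
  have hne : b ≠ n - b := by
    intro h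
    exact hg 2 (by norm_num) (by norm_num) 0 h0T 0 h0T n hnT 0 h0T (by linarith)
  have hrep : ∀ x ∈ insert b (insert (n - b) A), ∃ e t : ℤ, t ∈ T ∧ x = e * b + t ∧
      ((e = 0 ∧ t ∈ A) ∨ (e = 1 ∧ t = 0) ∨ (e = -1 ∧ t = n)) := by
    intro x hx
    rw [Finset.mem_insert, Finset.mem_insert] at hx
    rcases hx with rfl | rfl | hx
    · exact ⟨1, 0, h0T, by ring, by simp⟩
    · exact ⟨-1, n, hnT, by ring, by simp⟩
    · exact ⟨0, x, hAT x hx, by ring, by simp [hx]⟩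
  refine ⟨insert b (insert (n - b) A), ⟨?_, ?_, ?_⟩, ?_, n, hn, ?_, hmin⟩
  · intro x1 hx1 x2 hx2 x3 hx3 x4 hx4 he
    obtain ⟨e1, t1, ht1, r1, c1⟩ := hrep x1 (by exact_mod_cast hx1)
    obtain ⟨e2, t2, ht2, r2, c2⟩ := hrep x2 (by exact_mod_cast hx2)
    obtain ⟨e3, t3, ht3, r3, c3⟩ := hrep x3 (by exact_mod_cast hx3)
    obtain ⟨e4, t4, ht4, r4, c4⟩ := hrep x4 (by exact_mod_cast hx4)
    have E : (e1 + e2 - e3 - e4) * b = t3 + t4 - t1 - t2 := by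
      subst r1 r2 r3 r4; linarith
    have hle : |e1 + e2 - e3 - e4| ≤ 4 := by
      rw [abs_le]
      constructor <;> omega
    rw [abs_le] at hle
    have hz : e1 + e2 - e3 - e4 = 0 := by
      rcases lt_trichotomy (e1 + e2 - e3 - e4) 0 with h | h | h
      · exact absurd (by linarith) (hg (-(e1 + e2 - e3 - e4)) (by omega) (by omega)
          t3 ht3 t4 ht4 t1 ht1 t2 ht2)
      · exact h
      · exact absurd E (hg _ (by omega) (by omega) t1 ht1 t2 ht2 t3 ht3 t4 ht4)
    rw [hz] at E
    have hno : ∀ s ∈ A, ∀ t ∈ A, s + t ≠ n := fun s hs t ht h => hn ⟨s, hs, t, ht, h⟩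
    rcases c1 with ⟨rfl, c1⟩ | ⟨rfl, c1⟩ | ⟨rfl, c1⟩ <;>
    rcases c2 with ⟨rfl, c2⟩ | ⟨rfl, c2⟩ | ⟨rfl, c2⟩ <;>
    rcases c3 with ⟨rfl, c3⟩ | ⟨rfl, c3⟩ | ⟨rfl, c3⟩ <;>
    rcases c4 with ⟨rfl, c4⟩ | ⟨rfl, c4⟩ | ⟨rfl, c4⟩ <;>
    first
    | omega
    | (have := hno _ c1 _ c2; omega)
    | (have := hno _ c3 _ c4; omega)
    | (have := hS t1 c1 t2 c2 t3 c3 t4 c4 (by omega); omega)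
  · rw [Finset.card_insert_of_notMem, Finset.card_insert_of_notMem hnbA, hc]
    · ring
    · simp [hbA, hne]
  · have hk0 : (0 : ℤ) ≤ k := by positivity
    have hT4 : (T.card : ℤ) ^ 4 ≤ (2 * k + 2) ^ 4 := by
      have : (T.card : ℤ) ≤ 2 * k + 2 := by exact_mod_cast hTc
      gcongr
    have hn' : |n| ≤ 4 * (k : ℤ) ^ 2 := by
      rw [hc] at hnb
      zify at hnb
      linarith
    have hn2 := abs_le.1 hn'
    have hb3 : b ≤ 64 * ((k : ℤ) + 1) ^ 4 + 1 := by
      calc b ≤ _ := hb2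
        _ ≤ 4 * (2 * (k : ℤ) + 2) ^ 4 + 1 := by linarith
        _ = _ := by ring
    have hk4 : 4 * (k : ℤ) ^ 2 + 1 ≤ 5 * ((k : ℤ) + 1) ^ 4 := by
      have h1 : 0 ≤ (k : ℤ) ^ 2 := by positivity
      have h2 : 0 ≤ (k : ℤ) ^ 3 := by positivity
      have h3 : 0 ≤ (k : ℤ) ^ 4 := by positivity
      nlinarith
    intro x hx
    rw [Finset.mem_insert, Finset.mem_insert] at hx
    push_cast
    have h4 : 0 ≤ (k : ℤ) ^ 2 := by positivity
    rcases hx with rfl | rfl | hx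
    · rw [abs_le]; constructor <;> linarith
    · rw [abs_le]; constructor <;> linarith
    · refine (hbd x hx).trans ?_
      gcongr
      linarith
  · intro x hx
    simp [hx]
  · exact ⟨b, by simp, n - b, by simp, by ring⟩

lemma exists_seq : ∃ A : ℕ → Finset ℤ, ∀ k, UrbInv k (A k) ∧ Step (A k) (A (k + 1)) := by
  choose! F hF using step_exists
  let A : ℕ → Finset ℤ := fun k => Nat.rec ∅ (fun k B => F k B) k
  have hI : ∀ k, UrbInv k (A k) := by
    intro k
    induction k with
    | zero => exact ⟨by simp [SidonP, A], by simp [A], by simp [A]⟩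
    | succ k ih => exact (hF k _ ih).1
  exact ⟨A, fun k => ⟨hI k, (hF k _ (hI k)).2⟩⟩

/-- There exist `θ > 0` and a unique representation basis `A` such that
`A(-x,x) ≥ x^θ` for all sufficiently large real `x`. -/
theorem exists_theta_urb_ge_rpow :
    ∃ θ : ℝ, 0 < θ ∧ ∃ A : Set ℤ, IsUniqueRepBasis A ∧
      ∀ᶠ x : ℝ in atTop, x ^ θ ≤ (countIn A (-x) x : ℝ) := by
  obtain ⟨A, hA⟩ := exists_seq
  have hmono : Monotone A := monotone_nat_of_le_succ fun k => (hA k).2.1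
  have hrepmono : ∀ i j n, i ≤ j → IsRep (A i) n → IsRep (A j) n := by
    rintro i j n hij ⟨a, ha, b, hb, h⟩
    exact ⟨a, hmono hij ha, b, hmono hij hb, h⟩
  have hall : ∀ m, ∃ k, IsRep (A k) m := by
    intro m
    by_contra! hm
    choose n hn1 hn2 hn3 using fun k => (hA k).2.2
    have hinj : Function.Injective n := by
      have key : ∀ i j, i < j → n i ≠ n j := by
        intro i j hij h
        exact hn1 j (h ▸ hrepmono (i + 1) j _ hij (hn2 i))
      intro i j h
      rcases lt_trichotomy i j with h1 | h1 | h1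
      · exact absurd h (key i j h1)
      · exact h1
      · exact absurd h.symm (key j i h1)
    have hfin : (Set.range n).Finite := by
      apply (Set.finite_Icc (-(m.natAbs : ℤ)) m.natAbs).subset
      rintro _ ⟨k, rfl⟩
      have := hn3 k m (hm k)
      rw [Set.mem_Icc]
      omega
    exact Set.infinite_range_of_injective hinj hfin
  have hsid : SidonP (⋃ k, (A k : Set ℤ)) := by
    intro a ha b hb c hc d hd h
    rw [Set.mem_iUnion] at ha hb hc hd
    obtain ⟨i, hi⟩ := ha
    obtain ⟨j, hj⟩ := hb
    obtain ⟨k, hk⟩ := hc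
    obtain ⟨l, hl⟩ := hd
    refine (hA (i + j + k + l)).1.1 a ?_ b ?_ c ?_ d ?_ h
    · exact hmono (by omega) hi
    · exact hmono (by omega) hj
    · exact hmono (by omega) hk
    · exact hmono (by omega) hl
  refine ⟨1 / 8, by norm_num, ⋃ k, (A k : Set ℤ), ?_, ?_⟩
  · intro n
    obtain ⟨k, a, ha, b, hb, h⟩ := hall n
    have ha' : a ∈ ⋃ k, (A k : Set ℤ) := Set.mem_iUnion.2 ⟨k, ha⟩
    have hb' : b ∈ ⋃ k, (A k : Set ℤ) := Set.mem_iUnion.2 ⟨k, hb⟩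
    have main : ∀ a b : ℤ, a ∈ (⋃ k, (A k : Set ℤ)) → b ∈ (⋃ k, (A k : Set ℤ)) → a ≤ b →
        a + b = n → repCount (⋃ k, (A k : Set ℤ)) n = 1 := by
      intro a b ha hb hab h
      unfold repCount
      rw [Set.ncard_eq_one]
      refine ⟨(a, b), ?_⟩
      ext ⟨c, d⟩
      simp only [Set.mem_ofPred_eq, Set.mem_singleton_iff, Prod.mk.injEq]
      constructor
      · rintro ⟨hc, hd, hcd, he⟩
        have := hsid a ha b hb c hc d hd (by omega)
        omega
      · rintro ⟨rfl, rfl⟩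
        exact ⟨ha, hb, hab, h⟩
    rcases le_total a b with hab | hab
    · exact main a b ha' hb' hab h
    · exact main b a hb' ha' hab (by omega)
  · filter_upwards [eventually_ge_atTop ((1104 : ℝ) ^ 8)] with x hx
    have hx0 : 0 ≤ x := le_trans (by positivity) hx
    set y : ℝ := x ^ (1 / 8 : ℝ) with hy
    have hyx : y ^ 8 = x := by
      rw [hy, ← Real.rpow_natCast, ← Real.rpow_mul hx0]
      norm_num
    have hy0 : 0 ≤ y := Real.rpow_nonneg hx0 _
    have hy1 : 1104 ≤ y := by
      rw [← hyx] at hx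
      exact le_of_pow_le_pow_left₀ (by norm_num) hy0 hx
    set k := ⌈y⌉₊ with hk
    have hky : y ≤ k := Nat.le_ceil y
    have hky2 : (k : ℝ) ≤ 2 * y := by
      have := Nat.ceil_lt_add_one hy0
      linarith
    have hbound : 69 * (k : ℝ) ^ 4 ≤ x := by
      have h1 : (k : ℝ) ^ 4 ≤ (2 * y) ^ 4 := by gcongr
      have h2 : 1104 ≤ y ^ 4 := hy1.trans (le_self_pow₀ (by linarith) (by norm_num))
      rw [← hyx]
      nlinarith
    have hsub : (A k : Set ℤ) ⊆
        {a : ℤ | a ∈ (⋃ k, (A k : Set ℤ)) ∧ -x ≤ (a : ℝ) ∧ (a : ℝ) ≤ x} := by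
      intro a ha
      refine ⟨Set.mem_iUnion.2 ⟨k, ha⟩, ?_⟩
      have h1 : |a| ≤ 69 * (k : ℤ) ^ 4 := (hA k).1.2.2 a ha
      have h2 : |(a : ℝ)| ≤ 69 * (k : ℝ) ^ 4 := by exact_mod_cast h1
      exact abs_le.1 (h2.trans hbound)
    have hfin : {a : ℤ | a ∈ (⋃ k, (A k : Set ℤ)) ∧ -x ≤ (a : ℝ) ∧ (a : ℝ) ≤ x}.Finite := by
      apply (Set.finite_Icc ⌈-x⌉ ⌊x⌋).subset
      rintro a ⟨_, h1, h2⟩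
      exact ⟨Int.ceil_le.2 h1, Int.le_floor.2 h2⟩
    have hcard := Set.ncard_le_ncard hsub hfin
    rw [Set.ncard_coe_finset, (hA k).1.2.1] at hcard
    have : ((2 * k : ℕ) : ℝ) ≤ (countIn (⋃ k, (A k : Set ℤ)) (-x) x : ℝ) := by
      exact_mod_cast hcard
    push_cast at this
    linarith
end

section
/- For every ε > 0 there exists a unique representation basis A of the integers such that A(-x,x) ≥ (√2/2 − ε)·√x for infinitely many positive integers x. -/
open Filter Set

namespace URBAux

def Sid (A : Finset ℤ) : Prop :=
  ∀ a ∈ A, ∀ b ∈ A, ∀ c ∈ A, ∀ d ∈ A, a + b = c + d → (a = c ∧ b = d) ∨ (a = d ∧ b = c)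

/-- Ruzsa's construction. -/
lemma ruzsa (p : ℕ) (hp : p.Prime) :
    ∃ B : Finset ℤ, Sid B ∧ (∀ b ∈ B, 0 ≤ b ∧ b < (p * (p - 1) : ℕ)) ∧ B.card = p - 1 := by
  have : Fact p.Prime := ⟨hp⟩
  obtain ⟨g, hg⟩ := IsCyclic.exists_generator (α := (ZMod p)ˣ)
  have hord : orderOf g = p - 1 := by
    rw [orderOf_eq_card_of_forall_mem_zpowers hg, Nat.card_eq_fintype_card, ZMod.card_units]
  have hp2 := hp.two_le
  have hcop : Nat.Coprime (p - 1) p := by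
    have := Nat.coprime_self_sub_left (m := 1) (n := p) (by omega)
    simpa using this
  have key : ∀ b c : ℕ, b < p * (p - 1) → c < p * (p - 1) →
      ((b : ℕ) : ZMod p) = ((g ^ b : (ZMod p)ˣ) : ZMod p) →
      ((c : ℕ) : ZMod p) = ((g ^ c : (ZMod p)ˣ) : ZMod p) →
      ((b : ℕ) : ZMod p) = (c : ZMod p) → b = c := by
    intro b c hb hc h1 h2 h3
    have h4 : g ^ b = g ^ c := by
      apply Units.ext
      rw [← h1, ← h2, h3]
    have h5 : b ≡ c [MOD (p - 1)] := by
      rw [← hord]; exact pow_eq_pow_iff_modEq.1 h4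
    have h6 : b ≡ c [MOD p] := (ZMod.natCast_eq_natCast_iff _ _ _).1 h3
    have h7 : b ≡ c [MOD (p - 1) * p] := (Nat.modEq_and_modEq_iff_modEq_mul hcop).1 ⟨h5, h6⟩
    rw [mul_comm] at h7
    exact Nat.ModEq.eq_of_lt_of_lt h7 hb hc
  let f : ℕ → ℕ := fun i =>
    (Nat.chineseRemainder hcop i (((g ^ i : (ZMod p)ˣ) : ZMod p).val) : ℕ)
  have f1 : ∀ i, f i ≡ i [MOD (p - 1)] := fun i => (Nat.chineseRemainder hcop i _).2.1
  have f2 : ∀ i, ((f i : ℕ) : ZMod p) = ((g ^ (f i) : (ZMod p)ˣ) : ZMod p) := by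
    intro i
    have h := (Nat.chineseRemainder hcop i (((g ^ i : (ZMod p)ˣ) : ZMod p).val)).2.2
    have h2 := (ZMod.natCast_eq_natCast_iff _ _ _).2 h
    rw [ZMod.natCast_zmod_val] at h2
    have h3 : g ^ (f i) = g ^ i := pow_eq_pow_iff_modEq.2 (by rw [hord]; exact f1 i)
    rw [h3]; exact h2
  have f3 : ∀ i, f i < p * (p - 1) := by
    intro i
    have := Nat.chineseRemainder_lt_mul hcop i (((g ^ i : (ZMod p)ˣ) : ZMod p).val)
      (by omega) (by omega)
    rw [mul_comm]; exact this
  refine ⟨(Finset.range (p - 1)).image (fun i => (f i : ℤ)), ?_, ?_, ?_⟩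
  · intro a ha b hb c hc d hd h
    simp only [Finset.mem_image] at ha hb hc hd
    obtain ⟨i, -, rfl⟩ := ha
    obtain ⟨j, -, rfl⟩ := hb
    obtain ⟨k, -, rfl⟩ := hc
    obtain ⟨l, -, rfl⟩ := hd
    have h : f i + f j = f k + f l := by exact_mod_cast h
    have hs : (f i : ZMod p) + f j = f k + f l := by exact_mod_cast congrArg (Nat.cast (R := ZMod p)) h
    have hm : (f i : ZMod p) * f j = f k * f l := by
      rw [f2 i, f2 j, f2 k, f2 l, ← Units.val_mul, ← Units.val_mul, ← pow_add, ← pow_add, h]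
    have hz : ((f i : ZMod p) - f k) * ((f i : ZMod p) - f l) = 0 := by
      linear_combination (f i : ZMod p) * hs - hm
    rcases mul_eq_zero.1 hz with h0 | h0
    · have := key _ _ (f3 i) (f3 k) (f2 i) (f2 k) (sub_eq_zero.1 h0)
      left; omega
    · have := key _ _ (f3 i) (f3 l) (f2 i) (f2 l) (sub_eq_zero.1 h0)
      right; omega
  · intro b hb
    simp only [Finset.mem_image] at hb
    obtain ⟨i, -, rfl⟩ := hb
    exact ⟨by positivity, by exact_mod_cast f3 i⟩
  · rw [Finset.card_image_of_injOn, Finset.card_range]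
    intro i hi j hj hij
    simp only [Finset.coe_range, Set.mem_Iio] at hi hj
    have hij : f i = f j := Int.ofNat.inj hij
    have h : i ≡ j [MOD (p - 1)] := (f1 i).symm.trans (hij ▸ f1 j)
    exact Nat.ModEq.eq_of_lt_of_lt h hi hj

lemma bdd (A : Finset ℤ) : ∃ m : ℕ, ∀ a ∈ A, -(m : ℤ) ≤ a ∧ a ≤ m := by
  refine ⟨A.sup Int.natAbs, fun a ha => ?_⟩
  have := Finset.le_sup (f := Int.natAbs) ha
  omega

lemma append (A B : Finset ℤ) (hA : Sid A) (hB : Sid B) (m N : ℕ)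
    (hm : ∀ a ∈ A, -(m : ℤ) ≤ a ∧ a ≤ m) (hN : ∀ b ∈ B, 0 ≤ b ∧ b < (N : ℤ)) :
    ∃ A' : Finset ℤ, A ⊆ A' ∧ Sid A' ∧
      B.card ≤ (A'.filter (fun a => -(2 * N + 3 * m + 1 : ℤ) ≤ a ∧ a ≤ 2 * N + 3 * m + 1)).card
        + A.card ^ 2 := by
  classical
  set B' := B.filter (fun b => ∀ a ∈ A, ∀ a' ∈ A, ∀ b' ∈ B, a + b = a' + b' → a = a') with hB'
  obtain ⟨t, ht⟩ : ∃ t : ℤ, t = N + 3 * m + 1 := ⟨_, rfl⟩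
  set C := B'.image (fun b => b + t) with hC
  have hCmem : ∀ x ∈ C, x - t ∈ B' ∧ x - t ∈ B ∧ 0 ≤ x - t ∧ x - t < N := by
    intro x hx
    obtain ⟨b, hb, rfl⟩ := Finset.mem_image.1 hx
    have hbB : b ∈ B := (Finset.mem_filter.1 hb).1
    have e : b + t - t = b := by ring
    rw [e]
    exact ⟨hb, hbB, hN b hbB⟩
  have hmix : ∀ a ∈ A, ∀ a' ∈ A, ∀ b ∈ C, ∀ b' ∈ C, a + b = a' + b' → a = a' := by
    intro a ha a' ha' b hb b' hb' h
    exact (Finset.mem_filter.1 (hCmem b hb).1).2 a ha a' ha' _ (hCmem b' hb').2.1 (by linarith)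
  have hCC : ∀ a ∈ C, ∀ b ∈ C, ∀ c ∈ C, ∀ d ∈ C, a + b = c + d →
      (a = c ∧ b = d) ∨ (a = d ∧ b = c) := by
    intro a ha b hb c hc d hd h
    have := hB _ (hCmem a ha).2.1 _ (hCmem b hb).2.1 _ (hCmem c hc).2.1 _ (hCmem d hd).2.1
      (by linarith)
    omega
  refine ⟨A ∪ C, Finset.subset_union_left, ?_, ?_⟩
  · intro a ha b hb c hc d hd h
    have bA := hm
    have bC : ∀ x ∈ C, 0 ≤ x - t ∧ x - t < N := fun x hx => (hCmem x hx).2.2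
    rcases Finset.mem_union.1 ha with ha | ha <;> rcases Finset.mem_union.1 hb with hb | hb <;>
    rcases Finset.mem_union.1 hc with hc | hc <;> rcases Finset.mem_union.1 hd with hd | hd <;>
    first
    | exact hA a ha b hb c hc d hd h
    | exact hCC a ha b hb c hc d hd h
    | (have h1 := hmix a ha c hc b hb d hd (by linarith); omega)
    | (have h1 := hmix a ha d hd b hb c hc (by linarith); omega)
    | (have h1 := hmix b hb c hc a ha d hd (by linarith); omega)
    | (have h1 := hmix b hb d hd a ha c hc (by linarith); omega)
    | (exfalso
       first | have h1 := bA a ha | have h1 := bC a ha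
       first | have h2 := bA b hb | have h2 := bC b hb
       first | have h3 := bA c hc | have h3 := bC c hc
       first | have h4 := bA d hd | have h4 := bC d hd
       omega)
  · have h1 : C.card = B'.card := Finset.card_image_of_injective _ (add_left_injective t)
    have h2 : C ⊆ (A ∪ C).filter
        (fun a => -(2 * N + 3 * m + 1 : ℤ) ≤ a ∧ a ≤ 2 * N + 3 * m + 1) := by
      intro x hx
      have := (hCmem x hx).2.2
      refine Finset.mem_filter.2 ⟨Finset.mem_union_right _ hx, ?_⟩
      omega
    have h3 := Finset.card_le_card h2
    have h4 : (B.filter (fun b => ¬ ∀ a ∈ A, ∀ a' ∈ A, ∀ b' ∈ B, a + b = a' + b' → a = a')).card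
        ≤ (A ×ˢ A).card := by
      have hch : ∀ b ∈ B.filter
          (fun b => ¬ ∀ a ∈ A, ∀ a' ∈ A, ∀ b' ∈ B, a + b = a' + b' → a = a'),
          ∃ q : ℤ × ℤ, q ∈ A ×ˢ A ∧ q.1 ≠ q.2 ∧ ∃ b' ∈ B, q.1 + b = q.2 + b' := by
        intro b hb
        have := (Finset.mem_filter.1 hb).2
        push Not at this
        obtain ⟨a, ha, a', ha', b', hb', h, hne⟩ := this
        exact ⟨(a, a'), Finset.mem_product.2 ⟨ha, ha'⟩, hne, b', hb', h⟩
      choose! q hq using hch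
      refine Finset.card_le_card_of_injOn q (fun b hb => (hq b hb).1) ?_
      intro b hb c hc hbc
      obtain ⟨-, hne, b', hb', e1⟩ := hq b hb
      obtain ⟨-, -, c', hc', e2⟩ := hq c hc
      have hbB := (Finset.mem_filter.1 hb).1
      have hcB := (Finset.mem_filter.1 hc).1
      rw [← hbc] at e2
      have := hB b hbB c' hc' c hcB b' hb' (by linarith)
      rcases this with h | h
      · exact h.1
      · exfalso; apply hne; linarith [h.1]
    have h5 := Finset.card_filter_add_card_filter_not (s := B)
      (fun b => ∀ a ∈ A, ∀ a' ∈ A, ∀ b' ∈ B, a + b = a' + b' → a = a')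
    rw [Finset.card_product] at h4
    rw [← hB'] at h5
    rw [sq]
    omega

lemma rep (A : Finset ℤ) (hA : Sid A) (n : ℤ) :
    ∃ A' : Finset ℤ, A ⊆ A' ∧ Sid A' ∧ ∃ a ∈ A', ∃ b ∈ A', a + b = n := by
  classical
  by_cases h : ∃ a ∈ A, ∃ b ∈ A, a + b = n
  · exact ⟨A, subset_rfl, hA, h⟩
  push Not at h
  obtain ⟨m0, hm0⟩ := bdd A
  obtain ⟨m, hm⟩ : ∃ m : ℤ, m = m0 + n.natAbs := ⟨_, rfl⟩
  have hb : ∀ a ∈ A, -m ≤ a ∧ a ≤ m := by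
    intro a ha; have := hm0 a ha; omega
  have hn : -m ≤ n ∧ n ≤ m := by omega
  refine ⟨A ∪ {5 * m + 1, n - (5 * m + 1)}, Finset.subset_union_left, ?_,
    5 * m + 1, by simp, n - (5 * m + 1), by simp, by ring⟩
  intro a ha b hb' c hc d hd e
  simp only [Finset.mem_union, Finset.mem_insert, Finset.mem_singleton] at ha hb' hc hd
  rcases ha with ha | ha <;> rcases hb' with hb' | hb' <;>
  rcases hc with hc | hc <;> rcases hd with hd | hd <;>
  first
  | exact hA a ha b hb' c hc d hd e
  | (try have h1 := hb a ha
     try have h2 := hb b hb'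
     try have h3 := hb c hc
     try have h4 := hb d hd
     try have h5 := h a ha b hb'
     try have h6 := h c hc d hd
     omega)

lemma step (ε : ℝ) (hε : 0 < ε) (A : Finset ℤ) (hA : Sid A) (n : ℤ) (k : ℕ) :
    ∃ A' : Finset ℤ, A ⊆ A' ∧ Sid A' ∧ (∃ a ∈ A', ∃ b ∈ A', a + b = n) ∧
      ∃ x : ℕ, k < x ∧ (Real.sqrt 2 / 2 - ε) * Real.sqrt x ≤
        ((A'.filter (fun a : ℤ => -(x : ℤ) ≤ a ∧ a ≤ x)).card : ℝ) := by
  obtain ⟨A1, h1, hS1, a, ha, b, hb, hab⟩ := rep A hA n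
  obtain ⟨m, hm⟩ := bdd A1
  obtain ⟨M, hM⟩ := exists_nat_ge ((1 + (A1.card : ℝ) ^ 2) / ε)
  obtain ⟨p, hpge, hp⟩ := Nat.exists_infinite_primes (M + 3 * m + k + 2)
  obtain ⟨B, hB, hBN, hBc⟩ := ruzsa p hp
  obtain ⟨A2, h2, hS2, hc⟩ := append A1 B hS1 hB m (p * (p - 1)) hm hBN
  refine ⟨A2, h1.trans h2, hS2, ⟨a, h2 ha, b, h2 hb, hab⟩, 2 * p ^ 2, by nlinarith, ?_⟩
  have hsub : (A2.filter (fun a => -(2 * (p * (p - 1) : ℕ) + 3 * m + 1 : ℤ) ≤ a ∧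
      a ≤ 2 * (p * (p - 1) : ℕ) + 3 * m + 1)) ⊆
      A2.filter (fun a : ℤ => -((2 * p ^ 2 : ℕ) : ℤ) ≤ a ∧ a ≤ (2 * p ^ 2 : ℕ)) := by
    have : 2 * (p * (p - 1)) + 3 * m + 1 ≤ 2 * p ^ 2 := by
      obtain ⟨q, rfl⟩ : ∃ q, p = q + 1 := ⟨p - 1, by omega⟩
      simp only [Nat.add_sub_cancel]
      nlinarith
    intro x hx
    rw [Finset.mem_filter] at hx ⊢
    refine ⟨hx.1, ?_⟩
    have := hx.2
    generalize p * (p - 1) = u at *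
    generalize 2 * p ^ 2 = v at *
    omega
  have hc2 := Finset.card_le_card hsub
  have hc3 : p ≤ (A2.filter (fun a : ℤ => -((2 * p ^ 2 : ℕ) : ℤ) ≤ a ∧
      a ≤ (2 * p ^ 2 : ℕ))).card + A1.card ^ 2 + 1 := by omega
  have hc4 : (p : ℝ) ≤ ((A2.filter (fun a : ℤ => -((2 * p ^ 2 : ℕ) : ℤ) ≤ a ∧
      a ≤ (2 * p ^ 2 : ℕ))).card : ℝ) + (A1.card : ℝ) ^ 2 + 1 := by exact_mod_cast hc3
  have hs : Real.sqrt ((2 * p ^ 2 : ℕ) : ℝ) = Real.sqrt 2 * p := by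
    push_cast
    rw [Real.sqrt_mul (by norm_num), Real.sqrt_sq (by positivity)]
  rw [hs]
  have hMp : (M : ℝ) ≤ p := by exact_mod_cast (by omega : M ≤ p)
  have h5 : 1 + (A1.card : ℝ) ^ 2 ≤ p * ε := (div_le_iff₀ hε).1 (hM.trans hMp)
  have h6 : (1 : ℝ) ≤ Real.sqrt 2 := Real.one_le_sqrt.2 (by norm_num)
  have h7 : Real.sqrt 2 * Real.sqrt 2 = 2 := Real.mul_self_sqrt (by norm_num)
  have h8 : (Real.sqrt 2 / 2 - ε) * (Real.sqrt 2 * p) = p - Real.sqrt 2 * (p * ε) := by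
    linear_combination (p : ℝ) / 2 * h7
  rw [h8]
  have h9 : 1 * (p * ε) ≤ Real.sqrt 2 * (p * ε) :=
    mul_le_mul_of_nonneg_right h6 (by positivity)
  linarith

end URBAux

open URBAux in
/-- For every `ε > 0` there exists a unique representation basis `A` such that
`A(-x,x) ≥ (√2/2 − ε) √x` for infinitely many positive integers `x`. -/
theorem exists_urb_ge_sqrt_infinitely_often (ε : ℝ) (hε : 0 < ε) :
    ∃ A : Set ℤ, IsUniqueRepBasis A ∧
      {x : ℕ | 0 < x ∧
        (Real.sqrt 2 / 2 - ε) * Real.sqrt x ≤ (countIn A (-(x : ℝ)) (x : ℝ) : ℝ)}.Infinite := by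
  obtain ⟨e, he⟩ := exists_surjective_nat ℤ
  choose F hF1 hF2 hF3 hF4 using step ε hε
  let S : ℕ → {A : Finset ℤ // Sid A} := fun k =>
    Nat.rec ⟨∅, by intro a ha; simp at ha⟩ (fun k A => ⟨F A.1 A.2 (e k) k, hF2 _ _ _ _⟩) k
  have hSs : ∀ k, (S (k + 1)).1 = F (S k).1 (S k).2 (e k) k := fun k => rfl
  have hmono : Monotone (fun k => (S k).1) :=
    monotone_nat_of_le_succ fun k => by
      rw [hSs]; exact hF1 _ _ _ _
  have hsid : ∀ a b c d : ℤ, (∃ k, a ∈ (S k).1) → (∃ k, b ∈ (S k).1) → (∃ k, c ∈ (S k).1) →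
      (∃ k, d ∈ (S k).1) → a + b = c + d → (a = c ∧ b = d) ∨ (a = d ∧ b = c) := by
    rintro a b c d ⟨i, hi⟩ ⟨j, hj⟩ ⟨k, hk⟩ ⟨l, hl⟩ h
    exact (S (i + j + k + l)).2 a (hmono (by omega : i ≤ i + j + k + l) hi)
      b (hmono (by omega : j ≤ i + j + k + l) hj) c (hmono (by omega : k ≤ i + j + k + l) hk)
      d (hmono (by omega : l ≤ i + j + k + l) hl) h
  refine ⟨{a | ∃ k, a ∈ (S k).1}, ?_, ?_⟩
  · intro n
    obtain ⟨k, rfl⟩ := he n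
    obtain ⟨a, ha, b, hb, hab⟩ := hF3 (S k).1 (S k).2 (e k) k
    rw [← hSs] at ha hb
    have main : ∀ a b : ℤ, a ∈ (S (k + 1)).1 → b ∈ (S (k + 1)).1 → a + b = e k → a ≤ b →
        repCount {a | ∃ k, a ∈ (S k).1} (e k) = 1 := by
      intro a b ha hb hab hle
      unfold repCount
      rw [Set.ncard_eq_one]
      refine ⟨(a, b), ?_⟩
      ext ⟨c, d⟩
      simp only [Set.mem_ofPred_eq, Set.mem_singleton_iff, Prod.mk.injEq]
      constructor
      · rintro ⟨hc, hd, hcd, hs⟩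
        have := hsid c d a b hc hd ⟨k + 1, ha⟩ ⟨k + 1, hb⟩ (by omega)
        omega
      · rintro ⟨rfl, rfl⟩
        exact ⟨⟨k + 1, ha⟩, ⟨k + 1, hb⟩, hle, hab⟩
    rcases le_total a b with h | h
    · exact main a b ha hb hab h
    · exact main b a hb ha (by omega) h
  · apply Set.infinite_of_forall_exists_gt
    intro k
    obtain ⟨x, hkx, hx⟩ := hF4 (S k).1 (S k).2 (e k) k
    rw [← hSs] at hx
    refine ⟨x, ⟨by omega, hx.trans ?_⟩, hkx⟩
    unfold countIn
    rw [← Set.ncard_coe_finset]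
    refine Nat.cast_le.2 ?_
    apply Set.ncard_le_ncard
    · intro a ha
      simp only [Finset.coe_filter, Set.mem_ofPred_eq] at ha ⊢
      refine ⟨⟨k + 1, ha.1⟩, ?_, ?_⟩
      · exact_mod_cast ha.2.1
      · exact_mod_cast ha.2.2
    · apply (Set.finite_Icc (-(x : ℤ)) x).subset
      rintro a ⟨-, h1, h2⟩
      exact ⟨by exact_mod_cast h1, by exact_mod_cast h2⟩
end

section
/- If A is a unique representation basis of the integers, then liminf_{x→∞} A(-x,x)/√(x/log x) ≤ 4√7. -/
open Filter Set

theorem urb_sidon (A : Set ℤ) (hA : IsUniqueRepBasis A) (a b c d : ℤ) (ha : a ∈ A) (hb : b ∈ A)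
    (hc : c ∈ A) (hd : d ∈ A) (h : a + b = c + d) : (a = c ∧ b = d) ∨ (a = d ∧ b = c) := by
  have key : ∀ a b c d : ℤ, a ∈ A → b ∈ A → c ∈ A → d ∈ A → a ≤ b → c ≤ d → a + b = c + d →
      a = c ∧ b = d := by
    intro a b c d ha hb hc hd hab hcd h
    obtain ⟨p, hp⟩ := Set.ncard_eq_one.mp (hA (c + d))
    have h1 : (a, b) ∈ ({p} : Set (ℤ × ℤ)) := by rw [← hp]; exact ⟨ha, hb, hab, h⟩
    have h2 : (c, d) ∈ ({p} : Set (ℤ × ℤ)) := by rw [← hp]; exact ⟨hc, hd, hcd, rfl⟩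
    have h3 : (a, b) = (c, d) := by
      rw [Set.mem_singleton_iff.mp h1, Set.mem_singleton_iff.mp h2]
    exact ⟨congrArg Prod.fst h3, congrArg Prod.snd h3⟩
  rcases le_total a b with hab | hab <;> rcases le_total c d with hcd | hcd
  · exact Or.inl (key a b c d ha hb hc hd hab hcd h)
  · exact Or.inr (key a b d c ha hb hd hc hab hcd (by omega))
  · have := key b a c d hb ha hc hd hab hcd (by omega)
    exact Or.inr ⟨this.2, this.1⟩
  · have := key b a d c hb ha hd hc hab hcd (by omega)
    exact Or.inl ⟨this.2, this.1⟩

theorem pair_bound {ι : Type*} [DecidableEq ι] (F : Finset ℤ)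
    (hF : ∀ a ∈ F, ∀ b ∈ F, ∀ c ∈ F, ∀ d ∈ F, a + b = c + d → (a = c ∧ b = d) ∨ (a = d ∧ b = c))
    (r : ℤ → ι) (B : ℕ) (hB : ∀ a ∈ F, ∀ b ∈ F, r a = r b → b - a ≤ B) :
    ((F ×ˢ F).filter (fun p => r p.1 = r p.2)).card ≤ F.card + 2 * B := by
  have h1 : ((F ×ˢ F).filter (fun p => r p.1 = r p.2)) ⊆
      F.image (fun a => (a, a)) ∪
        ((F ×ˢ F).filter (fun p => r p.1 = r p.2 ∧ p.1 ≠ p.2)) := by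
    rintro ⟨a, b⟩ h
    simp only [Finset.mem_filter, Finset.mem_product, Finset.mem_union, Finset.mem_image,
      Prod.mk.injEq] at h ⊢
    by_cases hab : a = b
    · left; exact ⟨a, h.1.1, rfl, hab⟩
    · right; exact ⟨h.1, h.2, hab⟩
  refine (Finset.card_le_card h1).trans ((Finset.card_union_le _ _).trans ?_)
  refine Nat.add_le_add Finset.card_image_le ?_
  have h2 : ((Finset.Icc (-(B : ℤ)) B).erase 0).card = 2 * B := by
    rw [Finset.card_erase_of_mem (by simp), Int.card_Icc]; omega
  rw [← h2]
  refine Finset.card_le_card_of_injOn (fun p => p.2 - p.1) ?_ ?_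
  · rintro ⟨a, b⟩ h
    simp only [Finset.coe_filter, Finset.mem_product, Set.mem_ofPred_eq, Finset.coe_erase,
      Finset.coe_Icc, Set.mem_sdiff, Set.mem_Icc, Set.mem_singleton_iff] at h ⊢
    have := hB a h.1.1 b h.1.2 h.2.1
    have := hB b h.1.2 a h.1.1 h.2.1.symm
    have := h.2.2
    omega
  · rintro ⟨a, b⟩ h ⟨c, d⟩ h' he
    simp only [Finset.coe_filter, Finset.mem_product, Set.mem_ofPred_eq] at h h' he
    have := hF c h'.1.1 b h.1.2 a h.1.1 d h'.1.2 (by omega)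
    have := h.2.2
    rw [Prod.mk.injEq]
    omega

theorem sum_sq_fib {ι : Type*} [DecidableEq ι] (F : Finset ℤ) (r : ℤ → ι) (T : Finset ι)
    (hT : ∀ a ∈ F, r a ∈ T) :
    ∑ q ∈ T, (F.filter (fun a => r a = q)).card ^ 2 =
      ((F ×ˢ F).filter (fun p => r p.1 = r p.2)).card := by
  rw [Finset.card_eq_sum_card_fiberwise (f := fun p => r p.1) (t := T)]
  · refine Finset.sum_congr rfl fun q _ => ?_
    rw [sq, ← Finset.card_product]
    congr 1
    ext ⟨a, b⟩
    simp only [Finset.mem_filter, Finset.mem_product]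
    constructor
    · rintro ⟨⟨h1, h2⟩, h3, h4⟩
      exact ⟨⟨⟨h1, h3⟩, h2.trans h4.symm⟩, h2⟩
    · rintro ⟨⟨⟨h1, h3⟩, h2⟩, h4⟩
      exact ⟨⟨h1, h4⟩, h3, h2.symm.trans h4⟩
  · rintro ⟨a, b⟩ h
    simp only [Finset.coe_filter, Finset.mem_product, Set.mem_ofPred_eq] at h
    exact hT a h.1.1

/-- Folding of the integers onto the naturals. -/
def foldNat (a : ℤ) : ℕ := (if 0 ≤ a then a else -1 - a).toNat

theorem foldNat_lt (a : ℤ) (n : ℕ) : foldNat a < n ↔ -(n : ℤ) ≤ a ∧ a < n := by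
  unfold foldNat
  split_ifs <;> omega

/-- The block index. -/
def blk (N : ℕ) (a : ℤ) : ℕ := foldNat a / N + 1

theorem blk_le (N : ℕ) (hN : 0 < N) (a : ℤ) (l : ℕ) :
    blk N a ≤ l ↔ -((l * N : ℕ) : ℤ) ≤ a ∧ a < (l * N : ℕ) := by
  rw [← foldNat_lt, blk, Nat.succ_le_iff, Nat.div_lt_iff_lt_mul hN]

theorem blk_diff (N : ℕ) (hN : 0 < N) (a b : ℤ)
    (h : (decide (0 ≤ a), blk N a) = (decide (0 ≤ b), blk N b)) : b - a ≤ N := by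
  rw [Prod.mk.injEq] at h
  obtain ⟨h1, h2⟩ := h
  simp only [decide_eq_decide] at h1
  unfold blk at h2
  have h3 : foldNat a / N = foldNat b / N := by omega
  have ha := Nat.div_add_mod (foldNat a) N
  have hb := Nat.div_add_mod (foldNat b) N
  have ha' := Nat.mod_lt (foldNat a) hN
  have hb' := Nat.mod_lt (foldNat b) hN
  rw [h3] at ha
  have e1 : foldNat a < foldNat b + N := by omega
  have e2 : foldNat b < foldNat a + N := by omega
  unfold foldNat at e1 e2
  split_ifs at e1 e2 <;> omega

/-- The telescoping weight. -/
noncomputable def wg (l : ℕ) : ℝ := 1 / Real.sqrt l - 1 / Real.sqrt ((l + 1 : ℕ) : ℝ)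

theorem wg_sum (m n : ℕ) (h : m ≤ n) :
    ∑ l ∈ Finset.Ico m n, wg l = 1 / Real.sqrt m - 1 / Real.sqrt n := by
  induction n, h using Nat.le_induction with
  | base => simp
  | succ n hn ih => rw [Finset.sum_Ico_succ_top hn, ih, wg]; ring

theorem wg_lower (l : ℕ) (hl : 1 ≤ l) : 1 / (2 * ((l : ℝ) + 1)) ≤ Real.sqrt l * wg l := by
  have hl' : (0 : ℝ) < l := by exact_mod_cast hl
  have h1 : 0 < Real.sqrt l := Real.sqrt_pos.mpr hl'
  have h2 : 0 < Real.sqrt ((l + 1 : ℕ) : ℝ) := Real.sqrt_pos.mpr (by positivity)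
  have s1 : Real.sqrt l ^ 2 = l := Real.sq_sqrt hl'.le
  have s2 : Real.sqrt ((l + 1 : ℕ) : ℝ) ^ 2 = l + 1 := by
    rw [Real.sq_sqrt (by positivity)]; push_cast; ring
  unfold wg
  set u := Real.sqrt l
  set v := Real.sqrt ((l + 1 : ℕ) : ℝ)
  rw [← s2]
  have : u * (1 / u - 1 / v) - 1 / (2 * v ^ 2) = (2 * v ^ 2 - 2 * u * v - 1) / (2 * v ^ 2) := by
    field_simp
  have h3 : 0 ≤ (2 * v ^ 2 - 2 * u * v - 1) / (2 * v ^ 2) := by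
    apply div_nonneg _ (by positivity)
    nlinarith [sq_nonneg (v - u)]
  linarith

theorem wg_nonneg (l : ℕ) (hl : 1 ≤ l) : 0 ≤ wg l := by
  have hl' : (0 : ℝ) < l := by exact_mod_cast hl
  unfold wg
  rw [sub_nonneg]
  apply one_div_le_one_div_of_le (Real.sqrt_pos.mpr hl')
  apply Real.sqrt_le_sqrt
  push_cast; linarith

theorem harm_upper (N : ℕ) : ∑ l ∈ Finset.Icc 1 N, 1 / (l : ℝ) ≤ 1 + Real.log N := by
  have := harmonic_le_one_add_log N
  rw [harmonic_eq_sum_Icc] at this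
  push_cast at this
  simpa using this

theorem harm_lower (N : ℕ) (hN : 1 ≤ N) :
    Real.log N - 1 ≤ ∑ l ∈ Finset.Icc 1 N, 1 / ((l : ℝ) + 1) := by
  have h1 := log_add_one_le_harmonic N
  rw [harmonic_eq_sum_Icc] at h1
  push_cast at h1
  have h2 : ∑ l ∈ Finset.Icc 1 N, 1 / ((l : ℝ) + 1) =
      ∑ l ∈ Finset.Icc 1 N, ((l : ℝ))⁻¹ - 1 + 1 / ((N : ℝ) + 1) := by
    clear h1 hN
    induction N with
    | zero => simp
    | succ n ih =>
      rw [Finset.sum_Icc_succ_top (by omega), Finset.sum_Icc_succ_top (by omega), ih]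
      push_cast; ring
  have h3 : Real.log N ≤ Real.log (N + 1) :=
    Real.log_le_log (by exact_mod_cast hN) (by linarith)
  have h4 : (0 : ℝ) ≤ 1 / ((N : ℝ) + 1) := by positivity
  linarith

theorem final_ineq (c M N L W : ℝ) (hc : 112 < c ^ 2) (hc0 : 0 < c) (hM : 10 ≤ M)
    (hN : N = M + 1) (hL : 20 ≤ L) (h1 : W ^ 2 ≤ 5 * N * (2 * (1 + L)))
    (h2 : c * Real.sqrt M / Real.sqrt (2 * L) * ((L - 1) / 2) ≤ W) : False := by
  have h3 : 0 ≤ c * Real.sqrt M / Real.sqrt (2 * L) * ((L - 1) / 2) := by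
    apply mul_nonneg _ (by linarith)
    positivity
  have h4 := pow_le_pow_left₀ h3 h2 2
  rw [mul_pow, div_pow, mul_pow, Real.sq_sqrt (by linarith), Real.sq_sqrt (by linarith)] at h4
  have h5 : c ^ 2 * M / (2 * L) * ((L - 1) / 2) ^ 2 ≤ 11 * M * (1 + L) := by
    refine h4.trans (h1.trans ?_)
    nlinarith
  have h6 : c ^ 2 * M / (2 * L) * ((L - 1) / 2) ^ 2 = M * (c ^ 2 * (L - 1) ^ 2 / (8 * L)) := by
    field_simp; ring
  rw [h6, show 11 * M * (1 + L) = M * (11 * (1 + L)) by ring] at h5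
  have h7 := le_of_mul_le_mul_left h5 (by linarith)
  rw [div_le_iff₀ (by linarith)] at h7
  have h8 : 112 * (L - 1) ^ 2 ≤ c ^ 2 * (L - 1) ^ 2 := by gcongr
  nlinarith

theorem core (A : Set ℤ) (hA : IsUniqueRepBasis A) (c x0 : ℝ) (hc0 : 0 < c) (hc : 112 < c ^ 2)
    (h : ∀ x : ℝ, x0 ≤ x → c ≤ (countIn A (-x) x : ℝ) / Real.sqrt (x / Real.log x)) : False := by
  classical
  obtain ⟨N, hNbig⟩ := exists_nat_ge (max (x0 + 1) (max (Real.exp 20) 11))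
  have hNx : x0 + 1 ≤ N := (le_max_left _ _).trans hNbig
  have hNe : Real.exp 20 ≤ N := ((le_max_left _ _).trans (le_max_right _ _)).trans hNbig
  have hN11 : (11 : ℝ) ≤ N := ((le_max_right _ _).trans (le_max_right _ _)).trans hNbig
  have hN11' : 11 ≤ N := by exact_mod_cast hN11
  have hNpos : 0 < N := by omega
  have hNR : (0 : ℝ) < N := by linarith
  set L := Real.log N with hLdef
  have hL : 20 ≤ L := by
    rw [hLdef, Real.le_log_iff_exp_le hNR]; exact hNe
  set F : Finset ℤ := (Finset.Ico (-((N * N : ℕ) : ℤ)) ((N * N : ℕ) : ℤ)).filter (· ∈ A) with hFdef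
  have hFA : ∀ a ∈ F, a ∈ A := fun a ha => (Finset.mem_filter.mp ha).2
  have hFI : ∀ a ∈ F, blk N a ≤ N := fun a ha => by
    rw [blk_le N hNpos]
    have := (Finset.mem_filter.mp ha).1
    rwa [Finset.mem_Ico] at this
  have hFS : ∀ a ∈ F, ∀ b ∈ F, ∀ c ∈ F, ∀ d ∈ F, a + b = c + d →
      (a = c ∧ b = d) ∨ (a = d ∧ b = c) := fun a ha b hb c hc d hd h =>
    urb_sidon A hA a b c d (hFA a ha) (hFA b hb) (hFA c hc) (hFA d hd) h
  -- card bound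
  have hcard : F.card ≤ 2 * N + 1 := by
    have h1 := pair_bound F hFS (fun _ => ()) (2 * (N * N)) (by
      intro a ha b hb _
      have h1 := (Finset.mem_filter.mp ha).1
      have h2 := (Finset.mem_filter.mp hb).1
      rw [Finset.mem_Ico] at h1 h2
      push_cast at h1 h2 ⊢
      linarith)
    simp only [Finset.filter_true, Finset.card_product] at h1
    by_contra! hlt
    nlinarith
  set r : ℤ → Bool × ℕ := fun a => (decide (0 ≤ a), blk N a) with hr
  set T : Finset (Bool × ℕ) := Finset.univ ×ˢ Finset.Icc 1 N with hTdef
  have hT : ∀ a ∈ F, r a ∈ T := fun a ha => by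
    simp only [hTdef, hr, Finset.mem_product, Finset.mem_univ, true_and, Finset.mem_Icc]
    exact ⟨Nat.le_add_left 1 _, hFI a ha⟩
  have hS : ∑ q ∈ T, (F.filter (fun a => r a = q)).card ^ 2 ≤ 5 * N := by
    rw [sum_sq_fib F r T hT]
    have := pair_bound F hFS r N (fun a _ b _ hab => blk_diff N hNpos a b hab)
    omega
  set W : ℝ := ∑ a ∈ F, 1 / Real.sqrt (blk N a) with hW
  have hW1 : W = ∑ q ∈ T, ((F.filter (fun a => r a = q)).card : ℝ) * (1 / Real.sqrt q.2) := by
    rw [hW, ← Finset.sum_fiberwise_of_maps_to hT]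
    refine Finset.sum_congr rfl fun q _ => ?_
    rw [← nsmul_eq_mul]
    apply Finset.sum_eq_card_nsmul
    intro a ha
    have : r a = q := (Finset.mem_filter.mp ha).2
    rw [← this]
  have hup : W ^ 2 ≤ 5 * N * (2 * (1 + L)) := by
    rw [hW1]
    refine (Finset.sum_mul_sq_le_sq_mul_sq _ _ _).trans ?_
    have e1 : ∑ q ∈ T, ((F.filter (fun a => r a = q)).card : ℝ) ^ 2 ≤ 5 * N := by
      exact_mod_cast hS
    have e2 : ∑ q ∈ T, (1 / Real.sqrt q.2) ^ 2 ≤ 2 * (1 + L) := by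
      rw [hTdef, Finset.sum_product]
      have := harm_upper N
      have e3 : ∀ l : ℕ, (1 / Real.sqrt l) ^ 2 = 1 / (l : ℝ) := fun l => by
        rw [div_pow, Real.sq_sqrt (by positivity), one_pow]
      simp only [e3, Fintype.sum_bool]
      linarith
    exact mul_le_mul e1 e2 (Finset.sum_nonneg fun _ _ => sq_nonneg _) (by positivity)
  have hlow1 : ∑ l ∈ Finset.Icc 1 N, wg l * ((F.filter (fun a => blk N a ≤ l)).card : ℝ) ≤ W := by
    have e1 : ∀ l : ℕ, wg l * ((F.filter (fun a => blk N a ≤ l)).card : ℝ) =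
        ∑ a ∈ F, if blk N a ≤ l then wg l else 0 := fun l => by
      rw [← Finset.sum_filter, Finset.sum_const, nsmul_eq_mul, mul_comm]
    simp only [e1]
    rw [Finset.sum_comm]
    refine Finset.sum_le_sum fun a ha => ?_
    rw [← Finset.sum_filter]
    have e2 : (Finset.Icc 1 N).filter (fun l => blk N a ≤ l) = Finset.Ico (blk N a) (N + 1) := by
      ext l
      have : 1 ≤ blk N a := Nat.le_add_left 1 _
      simp only [Finset.mem_filter, Finset.mem_Icc, Finset.mem_Ico]
      omega
    rw [e2, wg_sum _ _ ((hFI a ha).trans (Nat.le_succ N))]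
    have : 0 ≤ 1 / Real.sqrt ((N + 1 : ℕ) : ℝ) := by positivity
    linarith
  have hcnt : ∀ l ∈ Finset.Icc 1 N, c * Real.sqrt ((N : ℝ) - 1) / Real.sqrt (2 * L) *
      Real.sqrt l ≤ ((F.filter (fun a => blk N a ≤ l)).card : ℝ) := by
    intro l hl
    rw [Finset.mem_Icc] at hl
    have hl1 : (1 : ℝ) ≤ l := by exact_mod_cast hl.1
    have hlN : (l : ℝ) ≤ N := by exact_mod_cast hl.2
    set x : ℝ := l * N - 1 with hx
    have hxN : l * ((N : ℝ) - 1) ≤ x := by rw [hx]; linarith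
    have hx10 : (N : ℝ) - 1 ≤ x := by rw [hx]; nlinarith
    have hxpos : 0 < x := by linarith
    have hlogpos : 0 < Real.log x := Real.log_pos (by linarith)
    have hlog : Real.log x ≤ 2 * L := by
      have : Real.log x ≤ Real.log ((N : ℝ) ^ 2) := Real.log_le_log hxpos (by rw [hx]; nlinarith)
      rwa [Real.log_pow] at this
    have h1 := h x (by linarith)
    rw [le_div_iff₀ (Real.sqrt_pos.mpr (div_pos hxpos hlogpos))] at h1
    have h2 : Real.sqrt ((N : ℝ) - 1) / Real.sqrt (2 * L) * Real.sqrt l ≤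
        Real.sqrt (x / Real.log x) := by
      rw [← Real.sqrt_div (by linarith), ← Real.sqrt_mul (div_nonneg (by linarith) (by linarith))]
      apply Real.sqrt_le_sqrt
      rw [div_mul_eq_mul_div]
      exact div_le_div₀ hxpos.le (by linarith) hlogpos hlog
    have h3 : countIn A (-x) x ≤ (F.filter (fun a => blk N a ≤ l)).card := by
      unfold countIn
      rw [← Set.ncard_coe_finset]
      refine Set.ncard_le_ncard ?_ (Finset.finite_toSet _)
      rintro a ⟨ha, ha1, ha2⟩
      have hb1 : -((l * N : ℕ) : ℤ) ≤ a := by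
        have : -((l * N : ℕ) : ℝ) ≤ (a : ℝ) := by push_cast; linarith
        exact_mod_cast this
      have hb2 : a < ((l * N : ℕ) : ℤ) := by
        have : (a : ℝ) < ((l * N : ℕ) : ℝ) := by push_cast; linarith
        exact_mod_cast this
      have hmul : l * N ≤ N * N := Nat.mul_le_mul_right N hl.2
      have hmul' : ((l * N : ℕ) : ℤ) ≤ ((N * N : ℕ) : ℤ) := by exact_mod_cast hmul
      rw [Finset.mem_coe, Finset.mem_filter, hFdef, Finset.mem_filter, Finset.mem_Ico]
      exact ⟨⟨⟨by linarith, by linarith⟩, ha⟩, (blk_le N hNpos a l).mpr ⟨hb1, hb2⟩⟩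
    have h4 : (countIn A (-x) x : ℝ) ≤ ((F.filter (fun a => blk N a ≤ l)).card : ℝ) := by
      exact_mod_cast h3
    calc c * Real.sqrt ((N : ℝ) - 1) / Real.sqrt (2 * L) * Real.sqrt l
        = c * (Real.sqrt ((N : ℝ) - 1) / Real.sqrt (2 * L) * Real.sqrt l) := by ring
      _ ≤ c * Real.sqrt (x / Real.log x) := by gcongr
      _ ≤ _ := h1.trans h4
  have hlow : c * Real.sqrt ((N : ℝ) - 1) / Real.sqrt (2 * L) * ((L - 1) / 2) ≤ W := by
    refine le_trans ?_ hlow1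
    set K := c * Real.sqrt ((N : ℝ) - 1) / Real.sqrt (2 * L) with hK
    have hK0 : 0 ≤ K := by positivity
    have e := harm_lower N hNpos
    calc K * ((L - 1) / 2) ≤ K * ((∑ l ∈ Finset.Icc 1 N, 1 / ((l : ℝ) + 1)) / 2) := by gcongr
      _ = ∑ l ∈ Finset.Icc 1 N, K * (1 / (2 * ((l : ℝ) + 1))) := by
        rw [Finset.sum_div, Finset.mul_sum]
        refine Finset.sum_congr rfl fun l _ => ?_
        field_simp
      _ ≤ _ := by
        refine Finset.sum_le_sum fun l hl => ?_
        have hl1 := (Finset.mem_Icc.mp hl).1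
        calc K * (1 / (2 * ((l : ℝ) + 1))) ≤ K * (Real.sqrt l * wg l) :=
              mul_le_mul_of_nonneg_left (wg_lower l hl1) hK0
          _ = wg l * (K * Real.sqrt l) := by ring
          _ ≤ _ := mul_le_mul_of_nonneg_left (hcnt l hl) (wg_nonneg l hl1)
  exact final_ineq c ((N : ℝ) - 1) N L W hc hc0 (by linarith) (by ring) hL hup hlow

/-- If `A` is a unique representation basis then
`liminf_{x→∞} A(-x,x)/√(x/log x) ≤ 4√7`. -/
theorem urb_liminf_le (A : Set ℤ) (hA : IsUniqueRepBasis A) :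
    liminf (fun x : ℝ => (countIn A (-x) x : ℝ) / Real.sqrt (x / Real.log x)) atTop ≤
      4 * Real.sqrt 7 := by
  rw [Filter.liminf_eq]
  apply Real.sSup_le _ (by positivity)
  intro c hc
  by_contra! hlt
  obtain ⟨x0, hx0⟩ := Filter.eventually_atTop.mp hc
  have h7 : 0 ≤ 4 * Real.sqrt 7 := by positivity
  have hs : Real.sqrt 7 ^ 2 = 7 := Real.sq_sqrt (by norm_num)
  exact core A hA c x0 (by linarith) (by nlinarith) hx0
end

section
/- Let A be a finite nonempty set of integers with 0 ∉ A and r_A(n) ≤ 1 for all n ∈ ℤ. Let m be a nonzero integer with r_A(m) = 0, let a* be an element of A of maximum absolute value, set b = 4|a*| + |m|, and let B = A ∪ {−b, b + m}. Then r_B(n) ≤ 1 for all n ∈ ℤ, r_B(m) = 1, and 0 ∉ B. -/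
open Filter Set

/-- Adding the pair `{-b, b+m}` with `b = 4|a*| + |m|` to a set `A` with all
representation counts at most one creates a representation of `m` while keeping
all representation counts at most one and avoiding `0`. -/
theorem repCount_union_pair (A : Finset ℤ) (hne : A.Nonempty) (h0 : (0 : ℤ) ∉ A)
    (hA : ∀ n : ℤ, repCount (↑A : Set ℤ) n ≤ 1)
    (m : ℤ) (hm : m ≠ 0) (hmA : repCount (↑A : Set ℤ) m = 0)
    (astar : ℤ) (hastar : astar ∈ A) (hmax : ∀ a ∈ A, |a| ≤ |astar|)
    (b : ℤ) (hb : b = 4 * |astar| + |m|)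
    (B : Set ℤ) (hB : B = (↑A : Set ℤ) ∪ {-b, b + m}) :
    (∀ n : ℤ, repCount B n ≤ 1) ∧ repCount B m = 1 ∧ (0 : ℤ) ∉ B := by
  have fin : ∀ (S : Set ℤ), S.Finite → ∀ n : ℤ,
      {p : ℤ × ℤ | p.1 ∈ S ∧ p.2 ∈ S ∧ p.1 ≤ p.2 ∧ p.1 + p.2 = n}.Finite := by
    intro S hS n
    exact (hS.prod hS).subset (fun p hp => ⟨hp.1, hp.2.1⟩)
  have hAfin : (↑A : Set ℤ).Finite := A.finite_toSet
  have hBfin : B.Finite := by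
    rw [hB]
    exact hAfin.union (Set.toFinite _)
  have uA : ∀ x ∈ A, ∀ y ∈ A, ∀ u ∈ A, ∀ v ∈ A, x ≤ y → u ≤ v → x + y = u + v →
      x = u ∧ y = v := by
    intro x hx y hy u hu v hv hxy huv h
    have h1 := (Set.ncard_le_one (fin _ hAfin (u + v))).1 (hA (u + v)) (x, y)
      ⟨hx, hy, hxy, h⟩ (u, v) ⟨hu, hv, huv, rfl⟩
    simpa using h1
  have nA : ∀ x ∈ A, ∀ y ∈ A, x ≤ y → x + y ≠ m := by
    intro x hx y hy hxy h
    have h1 := (Set.ncard_eq_zero (fin _ hAfin m)).1 hmA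
    have h2 : (x, y) ∈ (∅ : Set (ℤ × ℤ)) := by
      rw [← h1]
      exact ⟨hx, hy, hxy, h⟩
    exact h2
  have hs : 1 ≤ |astar| := by
    apply Int.one_le_abs
    rintro rfl
    exact h0 hastar
  have bd : ∀ a ∈ A, -|astar| ≤ a ∧ a ≤ |astar| := fun a ha => abs_le.1 (hmax a ha)
  have hm1 := neg_abs_le m
  have hm2 := le_abs_self m
  generalize |astar| = s at *
  generalize |m| = t at *
  have memB : ∀ x, x ∈ B → (x ∈ A ∧ -s ≤ x ∧ x ≤ s) ∨ x = -b ∨ x = b + m := by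
    intro x hx
    rw [hB] at hx
    rcases hx with hx | hx | hx
    · exact Or.inl ⟨hx, bd x hx⟩
    · exact Or.inr (Or.inl hx)
    · exact Or.inr (Or.inr hx)
  have uB : ∀ x ∈ B, ∀ y ∈ B, ∀ u ∈ B, ∀ v ∈ B, x ≤ y → u ≤ v → x + y = u + v →
      x = u ∧ y = v := by
    intro x hx y hy u hu v hv hxy huv h
    rcases memB x hx with ⟨hx', _, _⟩ | hx' | hx' <;>
    rcases memB y hy with ⟨hy', _, _⟩ | hy' | hy' <;>
    rcases memB u hu with ⟨hu', _, _⟩ | hu' | hu' <;>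
    rcases memB v hv with ⟨hv', _, _⟩ | hv' | hv' <;>
    first
    | omega
    | exact uA x hx' y hy' u hu' v hv' hxy huv h
    | exact absurd (by omega) (nA x hx' y hy' hxy)
    | exact absurd (by omega) (nA u hu' v hv' huv)
  have le1 : ∀ n : ℤ, repCount B n ≤ 1 := by
    intro n
    refine (Set.ncard_le_one (fin _ hBfin n)).2 ?_
    rintro ⟨x, y⟩ ⟨hx, hy, hxy, h⟩ ⟨u, v⟩ ⟨hu, hv, huv, h'⟩
    obtain ⟨h1, h2⟩ := uB x hx y hy u hu v hv hxy huv (h.trans h'.symm)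
    exact Prod.ext h1 h2
  refine ⟨le1, le_antisymm (le1 m) ?_, ?_⟩
  · refine (Set.ncard_pos (fin _ hBfin m)).2 ⟨(-b, b + m), ?_, ?_, ?_, ?_⟩
    · simp [hB]
    · simp [hB]
    · show -b ≤ b + m
      omega
    · show -b + (b + m) = m
      omega
  · intro h
    rcases memB 0 h with ⟨h, _⟩ | h | h
    · exact h0 h
    · omega
    · omega
end

section
/- Let A be a unique representation basis of the integers and let n be a positive integer. For each integer ℓ with 1 ≤ ℓ ≤ n, let N_ℓ be the number of elements of A in the interval ((ℓ−1)n, ℓn] and let M_ℓ be the number of elements of A in the interval [−ℓn, (−ℓ+1)n). Then N_ℓ · M_ℓ < 2n for every ℓ with 1 ≤ ℓ ≤ n. -/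
open Filter Set

/-- For a unique representation basis, `N_ℓ · M_ℓ < 2n` for every `1 ≤ ℓ ≤ n`. -/
theorem urb_mul_lt (A : Set ℤ) (hA : IsUniqueRepBasis A) (n : ℕ) (hn : 0 < n)
    (N M : ℕ → ℕ)
    (hN : ∀ ℓ : ℕ, N ℓ = {a : ℤ | a ∈ A ∧ ((ℓ : ℤ) - 1) * n < a ∧ a ≤ (ℓ : ℤ) * n}.ncard)
    (hM : ∀ ℓ : ℕ, M ℓ = {a : ℤ | a ∈ A ∧ -((ℓ : ℤ) * n) ≤ a ∧ a < (-(ℓ : ℤ) + 1) * n}.ncard) :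
    ∀ ℓ : ℕ, 1 ≤ ℓ → ℓ ≤ n → N ℓ * M ℓ < 2 * n := by
  intro ℓ h1 _
  rw [hN, hM]
  set S := {a : ℤ | a ∈ A ∧ ((ℓ : ℤ) - 1) * n < a ∧ a ≤ (ℓ : ℤ) * n} with hS
  set T := {a : ℤ | a ∈ A ∧ -((ℓ : ℤ) * n) ≤ a ∧ a < (-(ℓ : ℤ) + 1) * n} with hT
  have hpos : (0 : ℤ) ≤ ((ℓ : ℤ) - 1) * n := by
    have : (1 : ℤ) ≤ ℓ := by exact_mod_cast h1
    exact mul_nonneg (by linarith) (by positivity)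
  rw [← Set.ncard_prod]
  have hle : (S ×ˢ T).ncard ≤ (Set.Ioo (-(n : ℤ)) n).ncard := by
    apply Set.ncard_le_ncard_of_injOn (fun p : ℤ × ℤ => p.1 + p.2)
    · rintro ⟨a, b⟩ ⟨⟨_, ha1, ha2⟩, ⟨_, hb1, hb2⟩⟩
      simp only [Set.mem_Ioo] at *
      constructor <;> nlinarith
    · rintro ⟨a, b⟩ ⟨⟨haA, ha1, ha2⟩, ⟨hbA, hb1, hb2⟩⟩ ⟨c, d⟩ ⟨⟨hcA, hc1, hc2⟩, ⟨hdA, hd1, hd2⟩⟩ h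
      simp only at *
      obtain ⟨q, hq⟩ := Set.ncard_eq_one.mp (hA (a + b))
      have e1 : (b, a) ∈ ({q} : Set (ℤ × ℤ)) := by
        rw [← hq]; exact ⟨hbA, haA, by simp only; nlinarith, by simp only; ring⟩
      have e2 : (d, c) ∈ ({q} : Set (ℤ × ℤ)) := by
        rw [← hq]; exact ⟨hdA, hcA, by simp only; nlinarith, by simp only; linarith⟩
      have e : (b, a) = (d, c) := by
        rw [Set.mem_singleton_iff] at e1 e2; rw [e1, e2]
      simp only [Prod.mk.injEq] at e ⊢
      exact ⟨e.2, e.1⟩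
  have hc : (Set.Ioo (-(n : ℤ)) n).ncard = 2 * n - 1 := by
    rw [← Finset.coe_Ioo, Set.ncard_coe_finset, Int.card_Ioo]
    omega
  omega
end

section
/- Let A be a unique representation basis of the integers and let n be a positive integer. For each integer ℓ with 1 ≤ ℓ ≤ n, let N_ℓ be the number of elements of A in the interval ((ℓ−1)n, ℓn] and let M_ℓ be the number of elements of A in the interval [−ℓn, (−ℓ+1)n). Then ∑_{ℓ=1}^{n} (N_ℓ + M_ℓ)² < 14n. -/
open Filter Set

theorem urb_aux_unique (A : Set ℤ) (hA : IsUniqueRepBasis A) {a b c d : ℤ}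
    (ha : a ∈ A) (hb : b ∈ A) (hc : c ∈ A) (hd : d ∈ A) (h : a + b = c + d) :
    (a = c ∧ b = d) ∨ (a = d ∧ b = c) := by
  have h1 := hA (a + b)
  unfold repCount at h1
  obtain ⟨p, hp⟩ := Set.ncard_eq_one.mp h1
  have key : ∀ x y : ℤ, x ∈ A → y ∈ A → x ≤ y → x + y = a + b → (x, y) = p := by
    intro x y hx hy hxy hs
    have : (x, y) ∈ ({p} : Set (ℤ × ℤ)) := by
      rw [← hp]; exact ⟨hx, hy, hxy, hs⟩
    simpa using this
  rcases le_total a b with h2 | h2 <;> rcases le_total c d with h3 | h3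
  · have e := (key a b ha hb h2 rfl).trans (key c d hc hd h3 h.symm).symm
    simp only [Prod.mk.injEq] at e; exact Or.inl e
  · have e := (key a b ha hb h2 rfl).trans (key d c hd hc h3 (by omega)).symm
    simp only [Prod.mk.injEq] at e; exact Or.inr e
  · have e := (key b a hb ha h2 (by omega)).trans (key c d hc hd h3 h.symm).symm
    simp only [Prod.mk.injEq] at e; exact Or.inr e.symm
  · have e := (key b a hb ha h2 (by omega)).trans (key d c hd hc h3 (by omega)).symm
    simp only [Prod.mk.injEq] at e; exact Or.inl e.symm

theorem urb_aux_count (n : ℕ) (F : ℕ → Finset (ℤ × ℤ)) (φ : ℤ × ℤ → ℤ)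
    (hdis : ∀ l m p, p ∈ F l → p ∈ F m → l = m)
    (hinj : ∀ l m p q, p ∈ F l → q ∈ F m → φ p = φ q → p = q)
    (hmap : ∀ l p, p ∈ F l → -(n : ℤ) < φ p ∧ φ p < n) :
    ∑ l ∈ Finset.Icc 1 n, (F l).card ≤ 2 * n := by
  rw [← Finset.card_biUnion]
  · calc _ ≤ (Finset.Ioo (-(n : ℤ)) n).card := by
          apply Finset.card_le_card_of_injOn φ
          · intro p hp
            simp only [Finset.coe_biUnion, Set.mem_iUnion, Finset.mem_coe] at hp
            obtain ⟨l, _, hp⟩ := hp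
            simpa using hmap l p hp
          · intro p hp q hq h
            simp only [Finset.coe_biUnion, Set.mem_iUnion, Finset.mem_coe] at hp hq
            obtain ⟨l, _, hp⟩ := hp
            obtain ⟨m, _, hq⟩ := hq
            exact hinj l m p q hp hq h
      _ ≤ 2 * n := by rw [Int.card_Ioo]; omega
  · intro l _ m _ hlm
    rw [Function.onFun, Finset.disjoint_left]
    intro p hp hq
    exact hlm (hdis l m p hp hq)

theorem urb_aux_diff (A : Set ℤ) (hA : IsUniqueRepBasis A) (n : ℕ) (P : ℕ → Finset ℤ)
    (hP : ∀ l, ∀ a ∈ P l, a ∈ A)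
    (hdis : ∀ l m p, p ∈ P l → p ∈ P m → l = m)
    (hlen : ∀ l, ∀ a ∈ P l, ∀ b ∈ P l, a - b < n) :
    ∑ l ∈ Finset.Icc 1 n, ((P l).card * (P l).card - (P l).card) ≤ 2 * n := by
  simp only [← Finset.offDiag_card]
  apply urb_aux_count n (fun l => (P l).offDiag) (fun p => p.1 - p.2)
  · intro l m p h1 h2
    simp only [Finset.mem_offDiag] at h1 h2
    exact hdis l m p.1 h1.1 h2.1
  · rintro l m ⟨a, b⟩ ⟨c, d⟩ h1 h2 h
    simp only [Finset.mem_offDiag] at h1 h2 h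
    have := urb_aux_unique A hA (hP l a h1.1) (hP m d h2.2.1) (hP m c h2.1) (hP l b h1.2.1)
      (by omega)
    simp only [Prod.mk.injEq]
    have h3 := h1.2.2
    omega
  · rintro l ⟨a, b⟩ h1
    simp only [Finset.mem_offDiag] at h1
    have h3 := hlen l a h1.1 b h1.2.1
    have h4 := hlen l b h1.2.1 a h1.1
    constructor <;> simp only <;> omega

/-- For a unique representation basis, `∑_{ℓ=1}^{n} (N_ℓ + M_ℓ)² < 14n`. -/
theorem urb_sum_add_sq_lt (A : Set ℤ) (hA : IsUniqueRepBasis A) (n : ℕ) (hn : 0 < n)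
    (N M : ℕ → ℕ)
    (hN : ∀ ℓ : ℕ, N ℓ = {a : ℤ | a ∈ A ∧ ((ℓ : ℤ) - 1) * n < a ∧ a ≤ (ℓ : ℤ) * n}.ncard)
    (hM : ∀ ℓ : ℕ, M ℓ = {a : ℤ | a ∈ A ∧ -((ℓ : ℤ) * n) ≤ a ∧ a < (-(ℓ : ℤ) + 1) * n}.ncard) :
    ∑ ℓ ∈ Finset.Icc 1 n, (N ℓ + M ℓ) ^ 2 < 14 * n := by
  classical
  have hn' : (0 : ℤ) < n := by exact_mod_cast hn
  let P : ℕ → Finset ℤ := fun l =>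
    (Finset.Ioc (((l : ℤ) - 1) * n) ((l : ℤ) * n)).filter (fun a => a ∈ A ∧ 0 < a)
  let Q : ℕ → Finset ℤ := fun l =>
    (Finset.Ico (-((l : ℤ) * n)) ((-(l : ℤ) + 1) * n)).filter (fun a => a ∈ A ∧ a < 0)
  have mP : ∀ l a, a ∈ P l ↔ (((l : ℤ) * n - n < a ∧ a ≤ (l : ℤ) * n) ∧ a ∈ A ∧ 0 < a) := by
    intro l a
    have : ((l : ℤ) - 1) * n = l * n - n := by ring
    simp only [P, Finset.mem_filter, Finset.mem_Ioc, this]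
  have mQ : ∀ l a, a ∈ Q l ↔ ((-((l : ℤ) * n) ≤ a ∧ a < -((l : ℤ) * n) + n) ∧ a ∈ A ∧ a < 0) := by
    intro l a
    have : (-(l : ℤ) + 1) * n = -(l * n) + n := by ring
    simp only [Q, Finset.mem_filter, Finset.mem_Ico, this]
  have cP : ∀ l, 1 ≤ l → N l = (P l).card := by
    intro l hl
    rw [hN, ← Set.ncard_coe_finset]
    congr 1
    ext a
    have e : ((l : ℤ) - 1) * n = l * n - n := by ring
    have h0 : 0 ≤ ((l : ℤ) - 1) * n := mul_nonneg (by omega) hn'.le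
    simp only [Set.mem_ofPred_eq, Finset.mem_coe, mP]
    rw [e] at *
    constructor
    · rintro ⟨h1, h2, h3⟩; exact ⟨⟨h2, h3⟩, h1, by omega⟩
    · rintro ⟨⟨h2, h3⟩, h1, _⟩; exact ⟨h1, h2, h3⟩
  have cQ : ∀ l, 1 ≤ l → M l = (Q l).card := by
    intro l hl
    rw [hM, ← Set.ncard_coe_finset]
    congr 1
    ext a
    have e : (-(l : ℤ) + 1) * n = -(l * n) + n := by ring
    have h0 : 0 ≤ ((l : ℤ) - 1) * n := mul_nonneg (by omega) hn'.le
    have e' : ((l : ℤ) - 1) * n = l * n - n := by ring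
    simp only [Set.mem_ofPred_eq, Finset.mem_coe, mQ]
    rw [e]
    rw [e'] at h0
    constructor
    · rintro ⟨h1, h2, h3⟩; exact ⟨⟨h2, h3⟩, h1, by omega⟩
    · rintro ⟨⟨h2, h3⟩, h1, _⟩; exact ⟨h1, h2, h3⟩
  have hlm : ∀ l m : ℕ, (l : ℤ) * n - n < m * n → l ≤ m := by
    intro l m h
    have : ((l : ℤ) - 1) * n < m * n := by linarith
    have := lt_of_mul_lt_mul_right this hn'.le
    omega
  have dP : ∀ l m p, p ∈ P l → p ∈ P m → l = m := by
    intro l m p h1 h2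
    rw [mP] at h1 h2
    exact le_antisymm (hlm l m (by omega)) (hlm m l (by omega))
  have dQ : ∀ l m p, p ∈ Q l → p ∈ Q m → l = m := by
    intro l m p h1 h2
    rw [mQ] at h1 h2
    exact le_antisymm (hlm l m (by omega)) (hlm m l (by omega))
  have sP := urb_aux_diff A hA n P (fun l a h => ((mP l a).1 h).2.1) dP (by
    intro l a ha b hb
    rw [mP] at ha hb
    omega)
  have sQ := urb_aux_diff A hA n Q (fun l a h => ((mQ l a).1 h).2.1) dQ (by
    intro l a ha b hb
    rw [mQ] at ha hb
    omega)
  have sPQ := urb_aux_count n (fun l => P l ×ˢ Q l) (fun p => p.1 + p.2)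
    (by
      intro l m p h1 h2
      rw [Finset.mem_product] at h1 h2
      exact dP l m p.1 h1.1 h2.1)
    (by
      rintro l m ⟨a, b⟩ ⟨c, d⟩ h1 h2 h
      simp only [Finset.mem_product, mP, mQ] at h1 h2 h
      have := urb_aux_unique A hA h1.1.2.1 h1.2.2.1 h2.1.2.1 h2.2.2.1 h
      simp only [Prod.mk.injEq]
      omega)
    (by
      rintro l ⟨a, b⟩ h1
      simp only [Finset.mem_product, mP, mQ] at h1
      constructor <;> simp only <;> omega)
  simp only [Finset.card_product] at sPQ
  have key : ∑ l ∈ Finset.Icc 1 n, 3 * (N l + M l) ^ 2 ≤ ∑ l ∈ Finset.Icc 1 n,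
      (4 * ((P l).card * (P l).card - (P l).card) + 4 * ((Q l).card * (Q l).card - (Q l).card)
        + 8 * ((P l).card * (Q l).card) + 4) := by
    apply Finset.sum_le_sum
    intro l hl
    have hl1 := (Finset.mem_Icc.1 hl).1
    rw [cP l hl1, cQ l hl1]
    generalize (P l).card = x
    generalize (Q l).card = y
    have hx : x ≤ x * x := Nat.le_mul_self x
    have hy : y ≤ y * y := Nat.le_mul_self y
    zify [hx, hy]
    nlinarith [sq_nonneg ((x : ℤ) + y - 2)]
  simp only [Finset.sum_add_distrib, ← Finset.mul_sum, Finset.sum_const, Nat.card_Icc,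
    smul_eq_mul] at key
  omega
end
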